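/- arXiv:1011.5927 — 6 statements merged into one kernel-verified Lean document; each statement's English description precedes it below -/
import Mathlib

section
/- Fix E > V_L. There exists γ₀ = γ₀(E) > 0 such that for every γ ∈ (0, γ₀) the nonlinear oscillator equation ẍ + V_γ'(x) = 0 with V_γ(x) = V(x) + γx² admits exactly two T-periodic solutions of amplitude ‖x‖_{L∞} = (E − V_∞)^{1/2} γ^{−1/2} satisfying the symmetries x(−t) = x(t) = −x(T/2 − t) for all t ∈ ℝ, and the period admits the asymptotic expansion T = √2 π γ^{−1/2} + 2√2 ( ∫₀^{a₀} (E − V(x))^{−1/2} dx − a₀ (E − V_∞)^{−1/2} ) + O(γ) as γ → 0. -/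
/-!
The plan is to read everything off the solution `x` of `ẍ + V_γ'(x) = 0` with `x(0) = A`,
`ẋ(0) = 0`, where `A = √(E - V_∞) / √γ`. For small `γ` we have `A > a₀`, so its energy is exactly `E`.

*Existence.* The force `V' + 2γ·` is globally Lipschitz and `C¹`, so the solution exists for all time
and is determined by Cauchy data at any single time. While `x ≥ a₀` the potential `V` is constant, so
`x(t) = A cos (√(2γ) t)` until `x` reaches `a₀`. Then `x` crosses `[0, a₀]` with speed
`√(2 (E - V_γ(x)))`, bounded away from `0`, so it vanishes after the further time
`∫₀^{a₀} (2 (E - V_γ))^{-1/2}` (`reaches_zero`). Call the total time `T / 4` (`newton_quarter`);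
no improper integral is needed. The symmetries and the period `T` follow from uniqueness, because
`x(-t)` and `-x(T/2 - t)` solve the same equation (`symPeriodicSol_of_newton`).

*Uniqueness.* A symmetric periodic solution of amplitude `A` has energy `E` and is at rest at `t = 0`;
since `E > V_L`, the only turning points of energy `E` are `±A` when `γ` is small
(`SymPeriodicSol.initial`). Hence it is `x` or `-x`.

*Asymptotics.* `T` is an explicit `arccos` term plus a proper integral. The former is expanded with
`arcsin w = w + O(w³)` at `w = a₀ √γ / √(E - V_∞)`, and the integrand of the latter differs from its
value at `γ = 0` by `O(γ)` uniformly (`orbitPeriod_asymptotics`).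
-/

open Real

/-- A `T`-periodic solution of the oscillator `ẍ + V'(x) + 2γx = 0`
(i.e. `ẍ + V_γ'(x) = 0` with `V_γ(x) = V(x) + γ x²`), satisfying the symmetries
`x(-t) = x(t) = -x(T/2 - t)` and having sup-norm (amplitude) `A`. -/
def SymPeriodicSol (V : ℝ → ℝ) (γ T A : ℝ) (x : ℝ → ℝ) : Prop :=
  ContDiff ℝ 2 x ∧
  (∀ t, deriv (deriv x) t + deriv V (x t) + 2 * γ * x t = 0) ∧
  Function.Periodic x T ∧
  (∀ t, x (-t) = x t) ∧ (∀ t, x t = - x (T / 2 - t)) ∧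
  (⨆ t : ℝ, |x t|) = A

section OscHelpers

open scoped NNReal Manifold ContDiff

/-! ### Newton's equation with Lipschitz force -/

/-- A globally Lipschitz `C¹` vector field has global integral curves: Picard-Lindelöf on the ball of
radius `‖f q‖ + 1` about `q` gives a local solution on `(-ε, ε)` with `ε = 1 / (1 + K)` independent
of `q`, and the uniform time lemma extends it. -/
theorem exists_global_integral_curve {F : Type*} [NormedAddCommGroup F] [NormedSpace ℝ F]
    [CompleteSpace F] {f : F → F} {K : ℝ≥0} (hf : LipschitzWith K f) (hf1 : ContDiff ℝ 1 f)
    (p : F) : ∃ z : ℝ → F, z 0 = p ∧ ∀ t, HasDerivAt z (f (z t)) t := by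
  have key : ∀ q : F, ∃ z : ℝ → F, z 0 = q ∧
      IsMIntegralCurveOn (I := 𝓘(ℝ, F)) z f (Set.Ioo (-(1 / (1 + (K : ℝ)))) (1 / (1 + (K : ℝ)))) := by
    intro q
    have hε : (0 : ℝ) < 1 / (1 + (K : ℝ)) := by positivity
    have hpl : IsPicardLindelof (fun _ => f) (tmin := -(1 / (1 + (K : ℝ))))
        (tmax := 1 / (1 + (K : ℝ))) ⟨0, by constructor <;> linarith⟩ q
        (‖f q‖₊ + 1) 0 (‖f q‖₊ + K * (‖f q‖₊ + 1)) K := by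
      refine ⟨fun _ _ => hf.lipschitzOnWith, fun _ _ => continuousOn_const, ?_, ?_⟩
      · intro _ _ x hx
        have h1 := hf.dist_le_mul x q
        rw [dist_eq_norm] at h1
        have h2 : ‖f x‖ ≤ ‖f x - f q‖ + ‖f q‖ := norm_le_norm_sub_add _ _
        have h3 := mul_le_mul_of_nonneg_left (Metric.mem_closedBall.1 hx) K.2
        push_cast at h3 ⊢
        simp only [NNReal.val_eq_coe] at h3
        linarith
      · have hK := K.2
        have hn := norm_nonneg (f q)
        simp only [NNReal.val_eq_coe] at hK
        simp only [sub_zero, zero_sub, neg_neg, max_self]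
        push_cast
        rw [mul_one_div, div_le_iff₀ (by positivity)]
        nlinarith
    obtain ⟨z, hz0, hz⟩ := hpl.exists_eq_forall_mem_Icc_hasDerivWithinAt₀
    refine ⟨z, hz0, fun t ht => ?_⟩
    have := (hz t (Set.Ioo_subset_Icc_self ht)).hasDerivAt (Icc_mem_nhds ht.1 ht.2)
    exact (hasMFDerivAt_iff_hasFDerivAt.2 (HasDerivAt.hasFDerivAt this)).hasMFDerivWithinAt
  obtain ⟨z, hz0, hz⟩ := exists_isMIntegralCurve_of_isMIntegralCurveOn (I := 𝓘(ℝ, F)) (v := f)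
    (contMDiff_vectorSpace_iff_contDiff.2 hf1) (ε := 1 / (1 + (K : ℝ))) (by positivity) key p
  refine ⟨z, hz0, fun t => ?_⟩
  have h : HasFDerivAt z ((1 : ℝ →L[ℝ] ℝ).smulRight (f (z t))) t :=
    hasMFDerivAt_iff_hasFDerivAt.1 (hz t)
  simpa using h.hasDerivAt

/-- The first-order vector field `(x, v) ↦ (v, -g x)` on phase space associated with the equation
`ẍ + g(x) = 0`. -/
def phaseField (g : ℝ → ℝ) (z : ℝ × ℝ) : ℝ × ℝ := (z.2, -g z.1)

theorem phaseField_lipschitz {g : ℝ → ℝ} {K : ℝ≥0} (hg : LipschitzWith K g) :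
    LipschitzWith (max 1 (K * 1)) (phaseField g) :=
  LipschitzWith.prod_snd.prodMk ((hg.comp LipschitzWith.prod_fst).neg)

theorem exists_newton {g : ℝ → ℝ} {K : ℝ≥0} (hg : LipschitzWith K g) (hg1 : ContDiff ℝ 1 g)
    (a b : ℝ) : ∃ x y : ℝ → ℝ, x 0 = a ∧ y 0 = b ∧ (∀ t, HasDerivAt x (y t) t) ∧
      ∀ t, HasDerivAt y (-g (x t)) t := by
  obtain ⟨z, h0, hz⟩ := exists_global_integral_curve (phaseField_lipschitz hg)
    (contDiff_snd.prodMk ((hg1.comp contDiff_fst).neg)) (a, b)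
  exact ⟨fun t => (z t).1, fun t => (z t).2, by simp [h0], by simp [h0],
    fun t => (hz t).fst, fun t => (hz t).snd⟩

theorem newton_unique {g : ℝ → ℝ} {K : ℝ≥0} (hg : LipschitzWith K g) {x y x' y' : ℝ → ℝ}
    (hx : ∀ t, HasDerivAt x (y t) t) (hy : ∀ t, HasDerivAt y (-g (x t)) t)
    (hx' : ∀ t, HasDerivAt x' (y' t) t) (hy' : ∀ t, HasDerivAt y' (-g (x' t)) t) (t₀ : ℝ)
    (h : x t₀ = x' t₀) (h' : y t₀ = y' t₀) : x = x' := by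
  have := ODE_solution_unique_univ (v := fun _ => phaseField g) (s := fun _ => Set.univ)
    (f := fun t => (x t, y t)) (g := fun t => (x' t, y' t)) (t₀ := t₀)
    (fun _ => (phaseField_lipschitz hg).lipschitzOnWith)
    (fun t => ⟨(hx t).prodMk (hy t), trivial⟩) (fun t => ⟨(hx' t).prodMk (hy' t), trivial⟩)
    (by simp [h, h'])
  funext t
  exact congrArg Prod.fst (congrFun this t)

theorem newton_unique_Icc {g : ℝ → ℝ} {K : ℝ≥0} (hg : LipschitzWith K g) {x y x' y' : ℝ → ℝ}
    {a b : ℝ} (hab : a ≤ b)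
    (hx : ∀ t ∈ Set.Icc a b, HasDerivAt x (y t) t)
    (hy : ∀ t ∈ Set.Icc a b, HasDerivAt y (-g (x t)) t)
    (hx' : ∀ t ∈ Set.Icc a b, HasDerivAt x' (y' t) t)
    (hy' : ∀ t ∈ Set.Icc a b, HasDerivAt y' (-g (x' t)) t)
    (h : x a = x' a) (h' : y a = y' a) : x b = x' b ∧ y b = y' b := by
  have := ODE_solution_unique (v := fun _ => phaseField g) (a := a) (b := b)
    (f := fun t => (x t, y t)) (g := fun t => (x' t, y' t))
    (fun _ => phaseField_lipschitz hg)
    (fun t ht => ((hx t ht).prodMk (hy t ht)).continuousAt.continuousWithinAt)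
    (fun t ht => ((hx t (Set.Ico_subset_Icc_self ht)).prodMk
      (hy t (Set.Ico_subset_Icc_self ht))).hasDerivWithinAt)
    (fun t ht => ((hx' t ht).prodMk (hy' t ht)).continuousAt.continuousWithinAt)
    (fun t ht => ((hx' t (Set.Ico_subset_Icc_self ht)).prodMk
      (hy' t (Set.Ico_subset_Icc_self ht))).hasDerivWithinAt)
    (by simp [h, h']) (Set.right_mem_Icc.2 hab)
  exact Prod.ext_iff.1 this

/-! ### Travel time -/

/-- If `x` starts at `a` moving downwards, has `ẋ² ≤ 2 p(x)` everywhere and `ẋ² = 2 p(x)` while in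
`[0, a]`, then it vanishes after the time `∫₀ᵃ (2p)^{-1/2}`. With `F' = (2p)^{-1/2}`, the function
`F(x(t)) + t` is nondecreasing because of the inequality alone; this keeps `x ≥ 0` up to the claimed
time, which rules out a turning point, and then `F(x(t)) + t` is constant. -/
theorem reaches_zero {p x y : ℝ → ℝ} {a t₁ : ℝ} (hp : Continuous p) (hp0 : ∀ s, 0 < p s)
    (hx : ∀ t, HasDerivAt x (y t) t) (hy : Continuous y)
    (hle : ∀ t, y t ^ 2 ≤ 2 * p (x t))
    (heq : ∀ t, 0 ≤ x t → x t ≤ a → y t ^ 2 = 2 * p (x t))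
    (ha : 0 < a) (hxt : x t₁ = a) (hyt : y t₁ < 0) :
    x (t₁ + ∫ s in (0 : ℝ)..a, 1 / √(2 * p s)) = 0 := by
  have hq0 : ∀ s, 0 < √(2 * p s) := fun s => Real.sqrt_pos.2 (by linarith [hp0 s])
  have hq : Continuous fun s => 1 / √(2 * p s) :=
    continuous_const.div (by fun_prop) fun s => (hq0 s).ne'
  set F : ℝ → ℝ := fun z => ∫ s in (0 : ℝ)..z, 1 / √(2 * p s) with hF
  have hFd : ∀ z, HasDerivAt F (1 / √(2 * p z)) z := fun z => hq.integral_hasStrictDerivAt 0 z |>.hasDerivAt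
  have hF0 : F 0 = 0 := by simp [hF]
  have hFm : StrictMono F := strictMono_of_hasDerivAt_pos hFd fun z => one_div_pos.2 (hq0 z)
  change x (t₁ + F a) = 0
  have hτ : 0 < F a := hF0 ▸ hFm ha
  set τ := F a with hτd
  have hu : ∀ t, HasDerivAt (fun t => F (x t) + t) (1 / √(2 * p (x t)) * y t + 1) t := fun t =>
    ((hFd (x t)).comp t (hx t)).add (hasDerivAt_id t)
  have hum : Monotone fun t => F (x t) + t := by
    refine monotone_of_hasDerivAt_nonneg hu fun t => ?_
    have h1 : -√(2 * p (x t)) ≤ y t := by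
      have := Real.abs_le_sqrt (hle t)
      exact (abs_le.1 this).1
    have h2 : -1 ≤ y t / √(2 * p (x t)) := by
      rw [le_div_iff₀ (hq0 _)]; linarith
    simp only [Pi.zero_apply]
    rw [one_div_mul_eq_div]; linarith
  have hxnn : ∀ t ∈ Set.Icc t₁ (t₁ + τ), 0 ≤ x t := by
    intro t ht
    have h1 := hum ht.1
    simp only [hxt] at h1
    have h2 : F 0 ≤ F (x t) := by rw [hF0]; linarith [ht.2]
    exact hFm.le_iff_le.1 h2
  have hanti : ∀ t, (∀ s ∈ Set.Ico t₁ t, y s < 0) → t₁ ≤ t → x t ≤ a := by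
    intro t hs ht
    have : AntitoneOn x (Set.Icc t₁ t) := by
      refine antitoneOn_of_deriv_nonpos (convex_Icc _ _)
        (fun s _ => (hx s).continuousAt.continuousWithinAt)
        (fun s _ => (hx s).differentiableAt.differentiableWithinAt) fun s hs' => ?_
      rw [interior_Icc] at hs'
      rw [(hx s).deriv]
      exact (hs s ⟨hs'.1.le, hs'.2⟩).le
    rw [← hxt]
    exact this (Set.left_mem_Icc.2 ht) (Set.right_mem_Icc.2 ht) ht
  have hneg : ∀ t ∈ Set.Icc t₁ (t₁ + τ), y t < 0 := by
    by_contra! hcon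
    obtain ⟨t, ht, hyt0⟩ := hcon
    have hcomp : IsCompact (Set.Icc t₁ (t₁ + τ) ∩ {s | 0 ≤ y s}) :=
      isCompact_Icc.inter_right (isClosed_le continuous_const hy)
    -- The first time `u` with `ẋ ≥ 0` would have `ẋ u = 0` although `x u ∈ [0, a]`.
    obtain ⟨u, ⟨hu1, hu2⟩, hmin⟩ := hcomp.exists_isLeast ⟨t, ht, hyt0⟩
    simp only [Set.mem_ofPred_eq] at hu2
    have hlt : ∀ s ∈ Set.Ico t₁ u, y s < 0 := by
      intro s hs
      by_contra! h
      exact absurd (hmin ⟨⟨hs.1, hs.2.le.trans hu1.2⟩, h⟩) (not_le.2 hs.2)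
    have hxu := hanti u hlt hu1.1
    have hyu := heq u (hxnn u hu1) hxu
    obtain ⟨w, hw, hw0⟩ := intermediate_value_Icc hu1.1 hy.continuousOn
      (show (0 : ℝ) ∈ Set.Icc (y t₁) (y u) from ⟨hyt.le, hu2⟩)
    have hwu : w = u := le_antisymm hw.2 (hmin ⟨⟨hw.1, hw.2.trans hu1.2⟩, hw0.ge⟩)
    rw [hwu] at hw0
    rw [hw0] at hyu
    linarith [hp0 (x u)]
  have hconst := constant_of_has_deriv_right_zero (f := fun t => F (x t) + t) (a := t₁)
    (b := t₁ + τ) (fun s _ => (hu s).continuousAt.continuousWithinAt) (fun s hs => by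
      have hs' := Set.Ico_subset_Icc_self hs
      have h1 := heq s (hxnn s hs') (hanti s (fun r hr => hneg r ⟨hr.1, hr.2.le.trans hs'.2⟩) hs.1)
      have h2 : y s = -√(2 * p (x s)) := by
        rw [← h1, Real.sqrt_sq_eq_abs, abs_of_neg (hneg s hs'), neg_neg]
      have h3 := (hu s).hasDerivWithinAt (s := Set.Ici s)
      have h4 : 1 / √(2 * p (x s)) * y s + 1 = 0 := by
        rw [h2, one_div_mul_eq_div, neg_div, div_self (hq0 _).ne']; ring
      rwa [h4] at h3) (t₁ + τ) (Set.right_mem_Icc.2 (by linarith))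
  simp only [hxt] at hconst
  have : F (x (t₁ + τ)) = F 0 := by rw [hF0]; linarith
  exact hFm.injective this

/-! ### Asymptotics of the period -/

theorem abs_arcsin_sub_le {y : ℝ} (h0 : 0 ≤ y) (h1 : y ≤ 1 / 2) : |arcsin y - y| ≤ 2 * y ^ 3 := by
  rcases h0.eq_or_lt with rfl | hpos
  · simp
  set θ := arcsin y with hθ
  have hsin : sin θ = y := Real.sin_arcsin (by linarith) (by linarith)
  have hθ0 : 0 < θ := Real.arcsin_pos.2 hpos
  have hθ1 : θ ≤ π / 2 := Real.arcsin_le_pi_div_two y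
  have h2 := Real.mul_le_sin hθ0.le hθ1
  have h3 := Real.sin_gt_sub_cube hθ0
  have h4 := Real.sin_le hθ0.le
  rw [hsin] at h2 h3 h4
  have h5 : θ ≤ 2 * y := by
    rw [div_mul_eq_mul_div, div_le_iff₀ Real.pi_pos] at h2
    nlinarith [Real.pi_le_four]
  have h6 : θ ^ 3 ≤ (2 * y) ^ 3 := pow_le_pow_left₀ hθ0.le h5 3
  rw [abs_le]
  constructor <;> nlinarith [pow_pos hpos 3]

theorem abs_one_div_sqrt_sub_le {P Q d : ℝ} (hd : 0 < d) (hP : d ≤ P) (hQ : d ≤ Q) :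
    |1 / √P - 1 / √Q| ≤ |Q - P| / (2 * (d * √d)) := by
  have hsd := Real.sqrt_pos.2 hd
  have hsP := Real.sqrt_le_sqrt hP
  have hsQ := Real.sqrt_le_sqrt hQ
  have hP2 := Real.sq_sqrt (hd.le.trans hP)
  have hQ2 := Real.sq_sqrt (hd.le.trans hQ)
  have hd2 := Real.sq_sqrt hd.le
  set p := √P
  set q := √Q
  set e := √d
  have hp : 0 < p := hsd.trans_le hsP
  have hq : 0 < q := hsd.trans_le hsQ
  have h1 : 1 / p - 1 / q = (Q - P) / ((p + q) * (p * q)) := by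
    rw [← hP2, ← hQ2]; field_simp; ring
  rw [h1, abs_div, abs_of_pos (show 0 < (p + q) * (p * q) by positivity)]
  apply div_le_div_of_nonneg_left (abs_nonneg _) (by positivity)
  calc 2 * (d * e) = (e + e) * (e * e) := by rw [← hd2]; ring
    _ ≤ _ := by gcongr

/-- The period of the orbit of energy `E`, with `D = E - V_∞` and `a = a₀`: four times the sum of the
harmonic time from the turning point to `a` and the travel time from `a` to `0`. The truncation
`max c` (with `0 < c`) is inactive on `[0, a]` for small `γ`; it makes the integrand continuous and
positive on all of `ℝ`. -/
noncomputable def orbitPeriod (V : ℝ → ℝ) (D c a E γ : ℝ) : ℝ :=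
  4 * (arccos (a * √γ / √D) / √(2 * γ) + ∫ s in (0 : ℝ)..a, 1 / √(2 * max c (E - V s - γ * s ^ 2)))

theorem orbitPeriod_asymptotics {V : ℝ → ℝ} {D c a E γ : ℝ} (hV : Continuous V) (hD : 0 < D)
    (hc : 0 < c) (ha : 0 < a) (hγ : 0 < γ) (hVc : ∀ s, 2 * c ≤ E - V s) (hγc : γ * a ^ 2 ≤ c)
    (hγD : 4 * (γ * a ^ 2) ≤ D) :
    |orbitPeriod V D c a E γ - (√2 * π / √γ + 2 * √2 * ((∫ s in (0 : ℝ)..a, 1 / √(E - V s))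
      - a / √D))| ≤ (8 * a ^ 3 / √D ^ 3 + 4 * a ^ 3 / (2 * c * √(2 * c))) * γ := by
  have hsγ := Real.sqrt_pos.2 hγ
  have hsD := Real.sqrt_pos.2 hD
  have hs2 : 0 < √(2 : ℝ) := by positivity
  have h22 : √(2 : ℝ) ^ 2 = 2 := Real.sq_sqrt (by norm_num)
  have hγ2 := Real.sq_sqrt hγ.le
  have hs21 : 1 ≤ √(2 : ℝ) := by rw [Real.one_le_sqrt]; norm_num
  have hmul : √(2 * γ) = √2 * √γ := Real.sqrt_mul (by norm_num) γ
  set w := a * √γ / √D with hw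
  have hw0 : 0 ≤ w := by positivity
  have hw1 : w ≤ 1 / 2 := by
    rw [hw, div_le_iff₀ hsD, ← sub_nonneg]
    have : 2 * (a * √γ) ≤ √D := by
      apply Real.le_sqrt_of_sq_le
      calc (2 * (a * √γ)) ^ 2 = 4 * (√γ ^ 2 * a ^ 2) := by ring
        _ ≤ D := by rw [hγ2]; exact hγD
    linarith
  have harc := abs_arcsin_sub_le hw0 hw1
  set I := ∫ s in (0 : ℝ)..a, 1 / √(2 * max c (E - V s - γ * s ^ 2)) with hI
  set J := ∫ s in (0 : ℝ)..a, 1 / √(2 * (E - V s)) with hJ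
  have hcI : Continuous fun s => 1 / √(2 * max c (E - V s - γ * s ^ 2)) :=
    continuous_const.div (by fun_prop) fun s =>
      (Real.sqrt_pos.2 (by linarith [le_max_left c (E - V s - γ * s ^ 2)])).ne'
  have hcJ : Continuous fun s => 1 / √(2 * (E - V s)) :=
    continuous_const.div (by fun_prop) fun s => (Real.sqrt_pos.2 (by linarith [hVc s])).ne'
  have hIJ : |I - J| ≤ γ * a ^ 2 / (2 * c * √(2 * c)) * |a - 0| := by
    rw [hI, hJ, ← intervalIntegral.integral_sub (hcI.intervalIntegrable _ _)
      (hcJ.intervalIntegrable _ _), ← Real.norm_eq_abs]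
    refine intervalIntegral.norm_integral_le_of_norm_le_const fun s hs => ?_
    rw [Set.uIoc_of_le ha.le] at hs
    have hs2 : s ^ 2 ≤ a ^ 2 := pow_le_pow_left₀ hs.1.le hs.2 2
    have hγs : γ * s ^ 2 ≤ γ * a ^ 2 := mul_le_mul_of_nonneg_left hs2 hγ.le
    have hγs0 : 0 ≤ γ * s ^ 2 := by positivity
    rw [max_eq_right (by linarith [hVc s]), Real.norm_eq_abs]
    refine (abs_one_div_sqrt_sub_le (d := 2 * c) (by linarith) (by linarith [hVc s])
      (by linarith [hVc s])).trans ?_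
    rw [show 2 * (E - V s) - 2 * (E - V s - γ * s ^ 2) = 2 * (γ * s ^ 2) by ring,
      abs_of_nonneg (by positivity), mul_div_mul_left _ _ (by norm_num)]
    gcongr
  have hJ2 : (∫ s in (0 : ℝ)..a, 1 / √(E - V s)) = √2 * J := by
    rw [hJ, ← intervalIntegral.integral_const_mul]
    congr 1; funext s
    rw [Real.sqrt_mul (by norm_num)]
    field_simp
  have hsplit : orbitPeriod V D c a E γ
      - (√2 * π / √γ + 2 * √2 * ((∫ s in (0 : ℝ)..a, 1 / √(E - V s)) - a / √D))
      = 4 / √(2 * γ) * (w - arcsin w) + 4 * (I - J) := by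
    rw [hJ2]
    unfold orbitPeriod
    rw [← hw, ← hI, Real.arccos_eq_pi_div_two_sub_arcsin, hmul]
    have e1 : √2 * π / √γ = 4 / (√2 * √γ) * (π / 2) := by
      field_simp; rw [h22]; ring
    have e2 : 2 * √2 * (a / √D) = 4 / (√2 * √γ) * w := by
      rw [hw]; field_simp; rw [h22]; ring
    have e3 : 2 * √2 * (√2 * J) = 4 * J := by
      rw [show 2 * √2 * (√2 * J) = 2 * √2 ^ 2 * J by ring, h22]; ring
    rw [mul_sub, e1, e2, e3]
    ring
  rw [hsplit]
  refine (abs_add_le _ _).trans ?_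
  have b1 : |4 / √(2 * γ) * (w - arcsin w)| ≤ 8 * a ^ 3 / √D ^ 3 * γ := by
    rw [abs_mul, abs_sub_comm, abs_of_pos (show 0 < 4 / √(2 * γ) by rw [hmul]; positivity)]
    calc 4 / √(2 * γ) * |arcsin w - w| ≤ 4 / √γ * (2 * w ^ 3) := by
          gcongr; linarith
      _ = 8 * a ^ 3 / √D ^ 3 * √γ ^ 2 := by rw [hw]; field_simp; norm_num
      _ = _ := by rw [hγ2]
  have b2 : |4 * (I - J)| ≤ 4 * a ^ 3 / (2 * c * √(2 * c)) * γ := by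
    rw [abs_mul, abs_of_pos (show (0 : ℝ) < 4 by norm_num)]
    rw [sub_zero, abs_of_pos ha] at hIJ
    calc 4 * |I - J| ≤ 4 * (γ * a ^ 2 / (2 * c * √(2 * c)) * a) := by linarith
      _ = _ := by ring
  rw [add_mul]
  linarith

/-! ### The quarter orbit -/

theorem deriv_eq_zero_of_const {V : ℝ → ℝ} {a v : ℝ} (hV : ContDiff ℝ 1 V)
    (hc : ∀ x : ℝ, a ≤ |x| → V x = v) {x : ℝ} (hx : a ≤ x) : deriv V x = 0 := by
  have h1 : Set.EqOn (deriv V) 0 (Set.Ioi a) := by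
    intro s hs
    have : V =ᶠ[nhds s] fun _ => v := by
      filter_upwards [Ioi_mem_nhds hs] with r hr
      exact hc r (hr.le.trans (le_abs_self r))
    rw [this.deriv_eq]; simp
  have h2 := h1.closure (hV.continuous_deriv le_rfl) continuous_const
  rw [closure_Ioi] at h2
  exact h2 hx

theorem deriv_odd {V : ℝ → ℝ} (hVe : ∀ x, V (-x) = V x) (x : ℝ) : deriv V (-x) = -deriv V x := by
  have h := deriv_comp_neg V x
  simp only [hVe] at h
  linarith

/-- The derivative `V_γ'` of the potential `V_γ(s) = V(s) + γ s²`. -/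
noncomputable def force (V : ℝ → ℝ) (γ s : ℝ) : ℝ := deriv V s + 2 * γ * s

theorem contDiff_force {V : ℝ → ℝ} (hV : ContDiff ℝ 2 V) (γ : ℝ) : ContDiff ℝ 1 (force V γ) := by
  have h : ContDiff ℝ 1 (deriv V) := hV.iterate_deriv' 1 1
  unfold force
  fun_prop

theorem lipschitz_force {V : ℝ → ℝ} {a v : ℝ} (hV : ContDiff ℝ 2 V) (hVe : ∀ x, V (-x) = V x)
    (hc : ∀ x : ℝ, a ≤ |x| → V x = v) (γ : ℝ) : ∃ K : ℝ≥0, LipschitzWith K (force V γ) := by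
  have h1 : ContDiff ℝ 1 (deriv V) := hV.iterate_deriv' 1 1
  have hsupp : HasCompactSupport (deriv V) := by
    refine HasCompactSupport.of_support_subset_isCompact (isCompact_Icc (a := -a) (b := a)) ?_
    intro x hx
    rw [Set.mem_Icc, ← abs_le]
    by_contra! hlt
    apply hx
    rcases abs_cases x with ⟨h, _⟩ | ⟨h, _⟩
    · exact deriv_eq_zero_of_const (hV.of_le (by norm_num)) hc (h ▸ hlt.le)
    · have := deriv_eq_zero_of_const (hV.of_le (by norm_num)) hc (x := -x) (h ▸ hlt.le)
      rw [deriv_odd hVe] at this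
      linarith
  obtain ⟨K, hK⟩ := h1.lipschitzWith_of_hasCompactSupport hsupp (by norm_num)
  exact ⟨_, hK.add (lipschitzWith_smul (2 * γ))⟩

theorem force_neg {V : ℝ → ℝ} (hVe : ∀ x, V (-x) = V x) (γ s : ℝ) :
    force V γ (-s) = -force V γ s := by
  unfold force; rw [deriv_odd hVe]; ring

theorem energy_const {V : ℝ → ℝ} {γ : ℝ} {x y : ℝ → ℝ} (hV : Differentiable ℝ V)
    (hx : ∀ t, HasDerivAt x (y t) t) (hy : ∀ t, HasDerivAt y (-force V γ (x t)) t) (s t : ℝ) :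
    y s ^ 2 / 2 + (V (x s) + γ * x s ^ 2) = y t ^ 2 / 2 + (V (x t) + γ * x t ^ 2) := by
  have hd : ∀ r, HasDerivAt (fun r => y r ^ 2 / 2 + (V (x r) + γ * x r ^ 2)) 0 r := by
    intro r
    have h := (((hy r).pow 2).div_const 2).add
      (((hV (x r)).hasDerivAt.comp r (hx r)).add (((hx r).pow 2).const_mul γ))
    exact h.congr_deriv (by simp only [force]; push_cast; ring)
  exact is_const_of_deriv_eq_zero (fun r => (hd r).differentiableAt) (fun r => (hd r).deriv) s t

theorem le_amplitude {V : ℝ → ℝ} {a v E γ : ℝ} (hc : ∀ x : ℝ, a ≤ |x| → V x = v)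
    (hγ : 0 < γ) (hD : 0 < E - v) (haA : a ≤ √(E - v) / √γ) {z : ℝ} (hz : V z + γ * z ^ 2 ≤ E) :
    |z| ≤ √(E - v) / √γ := by
  by_contra! hlt
  rw [hc z (haA.trans hlt.le), ← sq_abs] at hz
  have h1 : (√(E - v) / √γ) ^ 2 < |z| ^ 2 := pow_lt_pow_left₀ hlt (by positivity) two_ne_zero
  rw [div_pow, Real.sq_sqrt hD.le, Real.sq_sqrt hγ.le, div_lt_iff₀ hγ] at h1
  linarith

theorem energy_amplitude {V : ℝ → ℝ} {a v E γ : ℝ} (hc : ∀ x : ℝ, a ≤ |x| → V x = v)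
    (hγ : 0 < γ) (hD : 0 < E - v) (haA : a ≤ √(E - v) / √γ) {z : ℝ}
    (hz : |z| = √(E - v) / √γ) : V z + γ * z ^ 2 = E := by
  rw [hc z (hz ▸ haA), ← sq_abs, hz, div_pow, Real.sq_sqrt hD.le, Real.sq_sqrt hγ.le]
  field_simp; ring

/-- For `γ` so small that `V_γ < E` on `[-a, a]`, the only points where `V_γ = E` are `±A`. -/
theorem turning_point {V : ℝ → ℝ} {a v E γ L : ℝ} (hc : ∀ x : ℝ, a ≤ |x| → V x = v)
    (hVL : ∀ x, V x ≤ L) (hγ : 0 < γ) (hLa : L + γ * a ^ 2 < E) {z : ℝ}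
    (hz : V z + γ * z ^ 2 = E) : |z| = √(E - v) / √γ := by
  have ha : a ≤ |z| := by
    by_contra! hlt
    have : |z| ^ 2 ≤ a ^ 2 := pow_le_pow_left₀ (abs_nonneg z) hlt.le 2
    rw [sq_abs] at this
    nlinarith [hVL z]
  rw [hc z ha] at hz
  rw [← Real.sqrt_div' _ hγ.le, ← Real.sqrt_sq_eq_abs]
  congr 1
  rw [eq_div_iff hγ.ne']; linarith

/-- The solution started at rest at `A` vanishes after a quarter of `orbitPeriod`: it is harmonic
down to `a`, and crosses `[0, a]` in the time given by `reaches_zero`. -/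
theorem newton_quarter {V : ℝ → ℝ} {a v E γ L c : ℝ} (hV : ContDiff ℝ 2 V)
    (hVe : ∀ x, V (-x) = V x) (ha : 0 < a)
    (hc : ∀ x : ℝ, a ≤ |x| → V x = v) (hVL : ∀ x, V x ≤ L) (hγ : 0 < γ) (hD : 0 < E - v)
    (hc0 : 0 < c) (hLa : L + γ * a ^ 2 + c ≤ E) (haA : a < √(E - v) / √γ) {x y : ℝ → ℝ}
    (hx : ∀ t, HasDerivAt x (y t) t) (hy : ∀ t, HasDerivAt y (-force V γ (x t)) t)
    (hx0 : x 0 = √(E - v) / √γ) (hy0 : y 0 = 0) :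
    x (orbitPeriod V (E - v) c a E γ / 4) = 0 := by
  obtain ⟨K, hK⟩ := lipschitz_force hV hVe hc γ
  have hVd : Differentiable ℝ V := hV.differentiable (by norm_num)
  set A := √(E - v) / √γ with hA
  have hA0 : 0 < A := ha.trans haA
  have hsγ := Real.sqrt_pos.2 hγ
  set ν := √(2 * γ) with hν
  have hν0 : 0 < ν := Real.sqrt_pos.2 (by linarith)
  have hν2 : ν * ν = 2 * γ := Real.mul_self_sqrt (by linarith)
  set w := a * √γ / √(E - v) with hw
  have hwA : w = a / A := by rw [hw, hA]; field_simp
  have hw0 : 0 < w := hwA ▸ div_pos ha hA0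
  have hw1 : w < 1 := by rw [hwA, div_lt_one hA0]; exact haA
  set t₁ := arccos w / ν with ht₁
  have hac : 0 < arccos w := Real.arccos_pos.2 hw1
  have ht₁0 : 0 < t₁ := div_pos hac hν0
  have hνt : ν * t₁ = arccos w := by rw [ht₁]; field_simp
  have hlin : ∀ t, HasDerivAt (fun t => ν * t) ν t := fun t => by
    simpa using (hasDerivAt_id t).const_mul ν
  -- up to time `t₁` the orbit stays where `V` is constant and is harmonic
  have hphase := newton_unique_Icc hK (x' := fun t => A * cos (ν * t))
    (y' := fun t => -(A * ν) * sin (ν * t)) ht₁0.le (fun t _ => hx t) (fun t _ => hy t)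
    (fun t _ => by
      exact ((hlin t).cos.const_mul A).congr_deriv (by ring))
    (fun t ht => by
      have h1 : w ≤ cos (ν * t) := by
        rw [← Real.cos_arccos (by linarith) hw1.le, ← hνt]
        apply Real.cos_le_cos_of_nonneg_of_le_pi (by have := ht.1; positivity)
        · rw [hνt]; exact Real.arccos_le_pi w
        · exact mul_le_mul_of_nonneg_left ht.2 hν0.le
      have h2 : a ≤ A * cos (ν * t) := by
        rw [hwA, div_le_iff₀ hA0] at h1; linarith
      have h3 : force V γ (A * cos (ν * t)) = 2 * γ * (A * cos (ν * t)) := by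
        unfold force
        rw [deriv_eq_zero_of_const (hV.of_le (by norm_num)) hc h2, zero_add]
      rw [h3, ← hν2]
      exact ((hlin t).sin.const_mul (-(A * ν))).congr_deriv (by ring))
    (by simp [hx0]) (by simp [hy0])
  rw [hνt, Real.cos_arccos (by linarith) hw1.le] at hphase
  obtain ⟨hp1, hp2⟩ := hphase
  have hxt : x t₁ = a := by rw [hp1, hwA]; field_simp
  have hyt : y t₁ < 0 := by
    rw [hp2]
    have := Real.sin_pos_of_pos_of_lt_pi hac
      ((Real.arccos_lt_pi_div_two.2 hw0).trans (by linarith [Real.pi_pos]))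
    have : 0 < A * ν * sin (arccos w) := by positivity
    linarith
  have hen : ∀ t, y t ^ 2 = 2 * (E - V (x t) - γ * x t ^ 2) := fun t => by
    have h := energy_const hVd hx hy t 0
    have h2 := energy_amplitude hc hγ hD haA.le (z := x 0) (by rw [hx0, abs_of_pos hA0])
    rw [h2, hy0] at h
    linarith
  have hVc := hV.continuous
  have := reaches_zero (p := fun s => max c (E - V s - γ * s ^ 2)) (a := a) (t₁ := t₁)
    (by fun_prop) (fun s => lt_max_of_lt_left hc0) hx
    (continuous_iff_continuousAt.2 fun t => (hy t).continuousAt)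
    (fun t => by rw [hen t]; linarith [le_max_right c (E - V (x t) - γ * x t ^ 2)])
    (fun t h0 h1 => by
      have : x t ^ 2 ≤ a ^ 2 := pow_le_pow_left₀ h0 h1 2
      rw [hen t, max_eq_right]
      nlinarith [hVL (x t)]) ha hxt hyt
  rwa [orbitPeriod, mul_div_cancel_left₀ _ (by norm_num)]

/-! ### Symmetric periodic solutions -/

/-- A solution started at rest at `±A` that vanishes at time `T / 4` has all the required symmetries:
`t ↦ x (-t)` and `t ↦ -x (T / 2 - t)` solve the same equation and share Cauchy data with `x` at `0`
and at `T / 4` respectively. Periodicity follows by composing the two reflections. -/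
theorem symPeriodicSol_of_newton {V : ℝ → ℝ} {a v E γ T : ℝ} (hV : ContDiff ℝ 2 V)
    (hVe : ∀ x, V (-x) = V x) (hc : ∀ x : ℝ, a ≤ |x| → V x = v) (hγ : 0 < γ) (hD : 0 < E - v)
    (haA : a ≤ √(E - v) / √γ) {x y : ℝ → ℝ}
    (hx : ∀ t, HasDerivAt x (y t) t) (hy : ∀ t, HasDerivAt y (-force V γ (x t)) t)
    (hx0 : |x 0| = √(E - v) / √γ) (hy0 : y 0 = 0) (hT : x (T / 4) = 0) :
    SymPeriodicSol V γ T (√(E - v) / √γ) x := by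
  obtain ⟨K, hK⟩ := lipschitz_force hV hVe hc γ
  have hxc : Continuous x := continuous_iff_continuousAt.2 fun t => (hx t).continuousAt
  have hdx : deriv x = y := funext fun t => (hx t).deriv
  have hdy : deriv y = fun t => -force V γ (x t) := funext fun t => (hy t).deriv
  have hrefl : ∀ t : ℝ, HasDerivAt (fun t : ℝ => T / 2 - t) (-1) t := fun t =>
    (hasDerivAt_id t).const_sub (T / 2)
  have heven : (fun t => x (-t)) = x :=
    newton_unique hK (y := fun t => -y (-t)) (y' := y)
      (fun t => ((hx (-t)).comp t (hasDerivAt_neg t)).congr_deriv (by ring))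
      (fun t => ((hy (-t)).comp t (hasDerivAt_neg t)).neg.congr_deriv (by ring)) hx hy 0 (by simp)
      (by simp [hy0])
  have hodd : x = fun t => -x (T / 2 - t) :=
    newton_unique hK (y := y) (y' := fun t => y (T / 2 - t)) hx hy
      (fun t => ((hx (T / 2 - t)).comp t (hrefl t)).neg.congr_deriv (by ring))
      (fun t => ((hy (T / 2 - t)).comp t (hrefl t)).congr_deriv
        (by rw [force_neg hVe]; ring)) (T / 4)
      (by rw [show T / 2 - T / 4 = T / 4 by ring, hT, neg_zero])
      (by rw [show T / 2 - T / 4 = T / 4 by ring])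
  have heven' : ∀ t, x (-t) = x t := fun t => congrFun heven t
  have hodd' : ∀ t, x t = -x (T / 2 - t) := fun t => congrFun hodd t
  refine ⟨?_, ?_, ?_, heven', hodd', ?_⟩
  · rw [show (2 : WithTop ℕ∞) = 1 + 1 from rfl, contDiff_succ_iff_deriv]
    refine ⟨fun t => (hx t).differentiableAt, by simp, ?_⟩
    rw [hdx, contDiff_one_iff_deriv]
    refine ⟨fun t => (hy t).differentiableAt, ?_⟩
    rw [hdy]
    exact ((contDiff_force hV γ).continuous.comp hxc).neg
  · intro t
    rw [hdx, (hy t).deriv]; unfold force; ring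
  · intro t
    rw [hodd' (t + T), ← heven', show -(T / 2 - (t + T)) = T / 2 - -t by ring, ← hodd', heven']
  · have hle : ∀ t, |x t| ≤ √(E - v) / √γ := fun t => by
      apply le_amplitude hc hγ hD haA
      have h := energy_const (hV.differentiable (by norm_num)) hx hy t 0
      rw [energy_amplitude hc hγ hD haA hx0, hy0] at h
      nlinarith [sq_nonneg (y t)]
    exact le_antisymm (ciSup_le hle) (hx0 ▸ le_ciSup ⟨_, Set.forall_mem_range.2 hle⟩ 0)

theorem SymPeriodicSol.newton {V : ℝ → ℝ} {γ T A : ℝ} {x : ℝ → ℝ} (h : SymPeriodicSol V γ T A x) :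
    (∀ t, HasDerivAt x (deriv x t) t) ∧ ∀ t, HasDerivAt (deriv x) (-force V γ (x t)) t := by
  obtain ⟨h2, hode, -⟩ := h
  refine ⟨fun t => (h2.differentiable (by norm_num) t).hasDerivAt, fun t => ?_⟩
  have h1 : ContDiff ℝ 1 (deriv x) := h2.iterate_deriv' 1 1
  have := (h1.differentiable (by norm_num) t).hasDerivAt
  refine this.congr_deriv ?_
  unfold force; linarith [hode t]

/-- A symmetric periodic solution of amplitude `A` starts at rest at `±A`: where `|x|` is maximal the
velocity vanishes, so the energy is `E`; evenness gives zero velocity at `0`, which must then be a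
turning point of that energy. -/
theorem SymPeriodicSol.initial {V : ℝ → ℝ} {a v E γ L T : ℝ} (hV : ContDiff ℝ 2 V)
    (hc : ∀ x : ℝ, a ≤ |x| → V x = v) (hVL : ∀ x, V x ≤ L) (hγ : 0 < γ) (hD : 0 < E - v)
    (hLa : L + γ * a ^ 2 < E) (haA : a ≤ √(E - v) / √γ) (hT : T ≠ 0) {x : ℝ → ℝ}
    (h : SymPeriodicSol V γ T (√(E - v) / √γ) x) :
    |x 0| = √(E - v) / √γ ∧ deriv x 0 = 0 := by
  obtain ⟨hx, hy⟩ := h.newton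
  obtain ⟨-, -, hper, heven, -, hsup⟩ := h
  have hxc : Continuous x := continuous_iff_continuousAt.2 fun t => (hx t).continuousAt
  have hA0 : 0 < √(E - v) / √γ := div_pos (Real.sqrt_pos.2 hD) (Real.sqrt_pos.2 hγ)
  have hcomp : IsCompact (Set.range fun t => |x t|) :=
    Function.Periodic.compact_of_continuous (c := T) (fun t => by simp only [hper t]) hT hxc.abs
  obtain ⟨t₀, ht₀⟩ := hcomp.sSup_mem (Set.range_nonempty _)
  have hbdd := hcomp.bddAbove
  have ht₀' : |x t₀| = √(E - v) / √γ := by rw [← hsup]; exact ht₀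
  have hmax : IsLocalMax (fun t => x t ^ 2) t₀ := by
    refine Filter.Eventually.of_forall fun t => sq_le_sq.2 ?_
    rw [ht₀', ← hsup]
    exact le_ciSup hbdd t
  have hyt₀ : deriv x t₀ = 0 := by
    have h1 := hmax.hasDerivAt_eq_zero ((hx t₀).pow 2)
    have h2 : x t₀ ≠ 0 := abs_pos.1 (ht₀' ▸ hA0)
    simpa [h2] using h1
  have hy0 : deriv x 0 = 0 := by
    have h1 := deriv_comp_neg x 0
    simp only [heven, neg_zero] at h1
    linarith
  refine ⟨turning_point hc hVL hγ hLa ?_, hy0⟩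
  have hen := energy_const (hV.differentiable (by norm_num)) hx hy 0 t₀
  rw [energy_amplitude hc hγ hD haA ht₀', hy0, hyt₀] at hen
  linarith

end OscHelpers

/-- for fixed `E > V_L` there is `γ₀ > 0` such that for all `γ ∈ (0,γ₀)` the
oscillator `ẍ + V_γ'(x) = 0` has exactly two `T`-periodic symmetric solutions of amplitude
`(E - V_∞)^{1/2} γ^{-1/2}`, and the period satisfies
`T = √2 π γ^{-1/2} + 2√2 (∫₀^{a₀} (E-V)^{-1/2} - a₀ (E-V_∞)^{-1/2}) + O(γ)` as `γ → 0`. -/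
theorem stmt0
    (V : ℝ → ℝ) (VL Vinf a0 : ℝ)
    (hV : ContDiff ℝ 2 V)
    (hVeven : ∀ x, V (-x) = V x)
    (hVnonneg : ∀ x, 0 ≤ V x) (hVle : ∀ x, V x ≤ VL) (hVL : 0 < VL)
    (ha0 : 0 < a0) (hVinf : 0 < Vinf) (hVinfL : Vinf ≤ VL)
    (hVconst : ∀ x : ℝ, a0 ≤ |x| → V x = Vinf)
    (E : ℝ) (hE : VL < E) :
    ∃ γ₀ > (0:ℝ), ∃ T : ℝ → ℝ, ∃ C > (0:ℝ),
      ∀ γ ∈ Set.Ioo (0:ℝ) γ₀,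
        (|T γ - (Real.sqrt 2 * π / Real.sqrt γ
            + 2 * Real.sqrt 2 * ((∫ s in (0:ℝ)..a0, 1 / Real.sqrt (E - V s))
              - a0 / Real.sqrt (E - Vinf)))| ≤ C * γ) ∧
        ∃ x₁ x₂ : ℝ → ℝ, x₁ ≠ x₂ ∧
          SymPeriodicSol V γ (T γ) (Real.sqrt (E - Vinf) / Real.sqrt γ) x₁ ∧
          SymPeriodicSol V γ (T γ) (Real.sqrt (E - Vinf) / Real.sqrt γ) x₂ ∧
          (∀ x : ℝ → ℝ, SymPeriodicSol V γ (T γ) (Real.sqrt (E - Vinf) / Real.sqrt γ) x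
            → x = x₁ ∨ x = x₂) := by
  have hD : 0 < E - Vinf := by linarith
  have hc0 : 0 < (E - VL) / 2 := by linarith
  have hsD := Real.sqrt_pos.2 hD
  have hsc := Real.sqrt_pos.2 (show 0 < 2 * ((E - VL) / 2) by linarith)
  -- This `γ₀` gives both `V_γ ≤ E - (E - V_L) / 2` on `[-a₀, a₀]` and `2 a₀ ≤ A`.
  refine ⟨(E - VL) / (4 * a0 ^ 2), by apply div_pos <;> [linarith; positivity],
    orbitPeriod V (E - Vinf) ((E - VL) / 2) a0 E, _, ?_, fun γ hγ => ⟨orbitPeriod_asymptotics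
      hV.continuous hD hc0 ha0 hγ.1 (fun s => by linarith [hVle s]) ?_ ?_, ?_⟩⟩
  · positivity
  all_goals
    have hγ0 : 0 < γ := hγ.1
    have hγ1 := hγ.2
    rw [lt_div_iff₀ (by positivity)] at hγ1
  · nlinarith
  · nlinarith
  have hA0 : 0 < √(E - Vinf) / √γ := div_pos hsD (Real.sqrt_pos.2 hγ0)
  have haA : a0 < √(E - Vinf) / √γ := by
    rw [← Real.sqrt_div' _ hγ0.le]
    apply Real.lt_sqrt_of_sq_lt
    rw [lt_div_iff₀ hγ0]
    nlinarith [mul_pos hγ0 (pow_pos ha0 2)]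
  have hLa : VL + γ * a0 ^ 2 + (E - VL) / 2 ≤ E := by nlinarith
  obtain ⟨K, hK⟩ := lipschitz_force hV hVeven hVconst γ
  obtain ⟨x, y, hx0, hy0, hx, hy⟩ :=
    exists_newton hK (contDiff_force hV γ) (√(E - Vinf) / √γ) 0
  have hx' : ∀ t, HasDerivAt (fun t => -x t) (-y t) t := fun t => (hx t).neg
  have hy' : ∀ t, HasDerivAt (fun t => -y t) (-force V γ (-x t)) t := fun t => by
    rw [force_neg hVeven]; exact (hy t).neg
  have hquarter := newton_quarter hV hVeven ha0 hVconst hVle hγ0 hD hc0 hLa haA hx hy hx0 hy0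
  have hT : orbitPeriod V (E - Vinf) ((E - VL) / 2) a0 E γ ≠ 0 := by
    intro h
    rw [h, zero_div, hx0] at hquarter
    exact hA0.ne' hquarter
  refine ⟨x, fun t => -x t, ?_, ?_, ?_, fun z hz => ?_⟩
  · intro h
    have := congrFun h 0
    simp only [hx0] at this
    linarith
  · exact symPeriodicSol_of_newton hV hVeven hVconst hγ0 hD haA.le hx hy
      (by rw [hx0, abs_of_pos hA0]) hy0 hquarter
  · exact symPeriodicSol_of_newton hV hVeven hVconst hγ0 hD haA.le hx' hy'
      (by rw [abs_neg, hx0, abs_of_pos hA0]) (by rw [hy0, neg_zero])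
      (by rw [hquarter, neg_zero])
  · obtain ⟨hz0, hdz0⟩ := hz.initial hV hVconst hVle hγ0 hD (by linarith) haA.le hT
    obtain ⟨hzd, hzdd⟩ := hz.newton
    rcases (abs_eq hA0.le).1 hz0 with h | h
    · exact .inl (newton_unique hK hzd hzdd hx hy 0 (by rw [h, hx0]) (by rw [hdz0, hy0]))
    · exact .inr (newton_unique hK hzd hzdd hx' hy' 0 (by rw [h, hx0])
        (by rw [hdz0, hy0, neg_zero]))
end

section
/- Fix E > V_L and ν ∈ (0,1). Define Ṽ_m = tilde-Γ_m and tilde-γ_m (for m large) as the unique small solutions of √(κ² + 4 Γ̃_m)/√((m+1)² − ν(m+1)) = √(Γ̃_m) ω₀(E,Γ̃_m) and κ/√(m² + νm) = √(γ̃_m) ω₀(E,γ̃_m), where ω₀(E,γ) = 2π γ^{−1/2}/T(E,γ). Then as m → ∞, Γ̃_m = (κ²/(2m²))(1 + κλ(E)/(πm) − (2−ν)/m + O(m^{−2})) and γ̃_m = (κ²/(2m²))(1 + κλ(E)/(πm) − ν/m + O(m^{−2})), where λ(E) = 2√2(∫₀^{a₀}(E−V(x))^{−1/2}dx − a₀(E−V_∞)^{−1/2}).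 In particular Γ̃_m < γ̃_m and |γ̃_m − Γ̃_m| = O(m^{−3}) as m → ∞. -/
/-!
Substituting `ω₀(γ) = 2πγ^{-1/2}/T(γ)`, both implicit equations become period conditions
`T(g) = (2π/κ)(m + c) + O(1/m + m g)`, with `c = ν/2` for `γ̃` and `c = 1 - ν/2` for `Γ̃`
(the term `m g` comes from replacing `√(κ² + 4g)` by `κ`). In the variable `w = κ/√(2g)`, so that
`g = κ²/(2w²)`, the expansion of `T` turns the condition into
`w = m + d + O(1/m + m/w²)` with `d = c - κλ/(2π)`. Since `g → 0`, `w → ∞`, and a bootstrap gives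
first `w ≥ m/2` and then `w = m + d + O(1/m)` (`abs_sub_le_of_bootstrap`). Inverting,
`1/w² = (1 - 2d/m)/m² + O(m⁻⁴)` (`inv_sq_expansion`), which is the claimed expansion
(`period_inversion`). The two values of `c` differ by `1 - ν > 0`, so the two expansions already
differ in their `m⁻³` term, whence the ordering and the `O(m⁻³)` gap.
-/

open Real

/-- Second-order expansion of `w⁻²` for `w = m + d + O(1/m)`, with explicit constants. -/
lemma inv_sq_expansion {m w d A : ℝ} (hA : 0 ≤ A) (hm1 : 1 ≤ m)
    (hm : 2 * (|d| + A) ≤ m) (hw : |w - (m + d)| ≤ A / m) :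
    |1 / w ^ 2 - (1 - 2 * d / m) / m ^ 2| ≤ (16 * d ^ 2 + 32 * A) / m ^ 4 := by
  have hm0 : 0 < m := by linarith
  have hAm : A / m ≤ A := div_le_self hA hm1
  have hd := abs_le.1 (le_refl |d|)
  have hd0 := abs_nonneg d
  obtain ⟨e, rfl⟩ : ∃ e, w = m + d + e := ⟨w - (m + d), by ring⟩
  have he : |e| ≤ A / m := by simpa using hw
  have he' := abs_le.1 (he.trans hAm)
  have hwm : m / 2 ≤ m + d + e := by linarith
  have hw0 : 0 < m + d + e := by linarith
  have hEq : 1 / (m + d + e) ^ 2 - (1 - 2 * d / m) / m ^ 2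
      = (d ^ 2 * (3 * m + 2 * d) - (2 * (m + d) + e) * (m - 2 * d) * e)
        / ((m + d + e) ^ 2 * m ^ 3) := by
    field_simp
    ring
  have h1 : |d ^ 2 * (3 * m + 2 * d)| ≤ d ^ 2 * (4 * m) := by
    rw [abs_mul, abs_of_nonneg (sq_nonneg d)]
    exact mul_le_mul_of_nonneg_left (abs_le.2 ⟨by linarith, by linarith⟩) (sq_nonneg d)
  have h2 : |(2 * (m + d) + e) * (m - 2 * d) * e| ≤ (4 * m) * (2 * m) * (A / m) := by
    rw [abs_mul, abs_mul]
    have a1 : |2 * (m + d) + e| ≤ 4 * m := abs_le.2 ⟨by linarith, by linarith⟩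
    have a2 : |m - 2 * d| ≤ 2 * m := abs_le.2 ⟨by linarith, by linarith⟩
    gcongr
  have h3 : (4 * m) * (2 * m) * (A / m) = 8 * A * m := by
    field_simp
    ring
  have hnum : |d ^ 2 * (3 * m + 2 * d) - (2 * (m + d) + e) * (m - 2 * d) * e|
      ≤ (4 * d ^ 2 + 8 * A) * m := by
    refine (abs_sub _ _).trans ?_
    rw [h3] at h2
    linarith
  have hden : m ^ 5 / 4 ≤ (m + d + e) ^ 2 * m ^ 3 := by
    have : (m / 2) ^ 2 ≤ (m + d + e) ^ 2 := by gcongr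
    calc m ^ 5 / 4 = (m / 2) ^ 2 * m ^ 3 := by ring
      _ ≤ _ := by gcongr
  rw [hEq, abs_div, abs_of_pos (show 0 < (m + d + e) ^ 2 * m ^ 3 by positivity)]
  calc _ ≤ (4 * d ^ 2 + 8 * A) * m / (m ^ 5 / 4) := by gcongr
    _ = _ := by
      field_simp
      ring

/-- A large `w` with `w = m + d + O(1/m + m/w²)` is at least `m/2`, which improves the error to
`O(1/m)`. -/
lemma abs_sub_le_of_bootstrap {m w d B : ℝ} (hB : 0 ≤ B) (hm1 : 1 ≤ m)
    (hm : 4 * (|d| + B) ≤ m) (hw0 : 0 < w) (hwB : 4 * B ≤ w ^ 2)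
    (hw : |w - (m + d)| ≤ B * (1 / m + m / w ^ 2)) :
    |w - (m + d)| ≤ 5 * B / m := by
  have hm0 : 0 < m := by linarith
  have hd := neg_abs_le d
  have h1 : B * (1 / m) ≤ B := by
    rw [mul_one_div]
    exact div_le_self hB hm1
  have h2 : B * (m / w ^ 2) ≤ m / 4 := by
    rw [← mul_div_assoc, div_le_iff₀ (by positivity)]
    nlinarith
  have h3 := (abs_le.1 hw).1
  have hwm : m / 2 ≤ w := by
    have : B * (1 / m + m / w ^ 2) = B * (1 / m) + B * (m / w ^ 2) := by ring
    linarith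
  have h4 : m / w ^ 2 ≤ 4 / m := by
    rw [div_le_div_iff₀ (by positivity) hm0]
    nlinarith
  calc _ ≤ B * (1 / m + 4 / m) := hw.trans (by gcongr)
    _ = _ := by ring

/-- Inversion of the period function: a small solution `g` of
`T(g) = (2π/κ)(m + c) + O(1/m + m g)` has the expansion
`g = (κ²/(2m²))(1 + κλ/(πm) - 2c/m + O(m⁻²))`. -/
lemma period_inversion {κ lam c : ℝ} (hκ : 0 < κ) {T : ℝ → ℝ}
    (hT : ∃ C > (0:ℝ), ∃ γ' > (0:ℝ), ∀ γ ∈ Set.Ioo (0:ℝ) γ',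
      |T γ - (Real.sqrt 2 * π / Real.sqrt γ + lam)| ≤ C * γ)
    {g : ℕ → ℝ} (hg : ∀ᶠ m in Filter.atTop, 0 < g m)
    (hg0 : Filter.Tendsto g Filter.atTop (nhds 0)) {B : ℝ} (hB : 0 ≤ B)
    (hTg : ∀ᶠ m : ℕ in Filter.atTop,
      |T (g m) - 2 * π / κ * (m + c)| ≤ B * (1 / m + m * g m)) :
    ∃ K > (0:ℝ), ∀ᶠ m : ℕ in Filter.atTop,
      |g m - κ ^ 2 / (2 * (m : ℝ) ^ 2)
          * (1 + κ * lam / (π * (m : ℝ)) - 2 * c / (m : ℝ))| ≤ K / (m : ℝ) ^ 4 := by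
  obtain ⟨C, hC, γ', hγ', hT⟩ := hT
  have hπ := Real.pi_pos
  set d : ℝ := c - κ * lam / (2 * π) with hd
  -- The error constant for `w`: the factor `κ/(2π)` isolates `w`, and `g = (κ²/2)/w²`.
  set B' : ℝ := κ / (2 * π) * (B + (B + C) * (κ ^ 2 / 2)) with hB'
  have hB'0 : 0 ≤ B' := by positivity
  set A : ℝ := 5 * B' with hA
  refine ⟨κ ^ 2 / 2 * (16 * d ^ 2 + 32 * A) + 1, by positivity, ?_⟩
  have hbig : ∀ M : ℝ, ∀ᶠ m : ℕ in Filter.atTop, M ≤ (m : ℝ) := fun M =>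
    tendsto_natCast_atTop_atTop.eventually_ge_atTop M
  have hsm : ∀ᶠ m in Filter.atTop, g m < κ ^ 2 / 2 / (4 * B' + 1) :=
    hg0.eventually_lt_const (by positivity)
  filter_upwards [hg, hg0.eventually_lt_const hγ', hTg, hbig 1, hbig (4 * (|d| + B')),
    hbig (2 * (|d| + A)), hsm] with m hgm hgγ hTm hm1 hm2 hm3 hgs
  have hm0 : (0:ℝ) < m := by linarith
  have hs0 : 0 < √(g m) := Real.sqrt_pos.2 hgm
  have hs2 : √(g m) ^ 2 = g m := Real.sq_sqrt hgm.le
  have h20 : 0 < √(2:ℝ) := by positivity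
  have h22 : √(2:ℝ) ^ 2 = 2 := Real.sq_sqrt (by norm_num)
  obtain ⟨w, hw⟩ : ∃ w, w = κ / (√2 * √(g m)) := ⟨_, rfl⟩
  have hw0 : 0 < w := by rw [hw]; positivity
  have hw2 : w ^ 2 = κ ^ 2 / (2 * g m) := by
    rw [hw, div_pow, mul_pow, h22, hs2]
  have hgw : g m = κ ^ 2 / 2 * (1 / w ^ 2) := by
    rw [hw2]
    field_simp
  have hwB : 4 * B' ≤ w ^ 2 := by
    rw [lt_div_iff₀ (by positivity)] at hgs
    rw [hw2, le_div_iff₀ (by positivity)]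
    nlinarith
  have hTw : √2 * π / √(g m) = 2 * π / κ * w := by
    rw [hw]
    field_simp
    exact h22
  have hTm' := hT (g m) ⟨hgm, hgγ⟩
  rw [hTw] at hTm'
  have hgle : g m ≤ m * g m := le_mul_of_one_le_left hgm.le hm1
  have hkey : |w - (m + d)| ≤ B' * (1 / m + m / w ^ 2) := by
    have e1 : w - (m + d) = κ / (2 * π) * ((T (g m) - 2 * π / κ * (m + c))
        - (T (g m) - (2 * π / κ * w + lam))) := by
      rw [hd]
      field_simp
      ring
    have e2 : |(T (g m) - 2 * π / κ * (m + c)) - (T (g m) - (2 * π / κ * w + lam))|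
        ≤ B * (1 / m) + (B + C) * (m * g m) := by
      refine (abs_sub _ _).trans ?_
      nlinarith
    have e3 : m * g m = κ ^ 2 / 2 * (m / w ^ 2) := by
      rw [hgw]
      ring
    rw [e1, abs_mul, abs_of_pos (by positivity : 0 < κ / (2 * π))]
    have f1 : 0 ≤ 1 / (m : ℝ) := by positivity
    have f2 : 0 ≤ (m : ℝ) / w ^ 2 := by positivity
    have f3 : B * (1 / m) + (B + C) * (m * g m)
        ≤ (B + (B + C) * (κ ^ 2 / 2)) * (1 / m + m / w ^ 2) := by
      rw [e3]
      have f4 : 0 ≤ (B + C) * (κ ^ 2 / 2) * (1 / (m : ℝ)) := by positivity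
      have f5 : 0 ≤ B * ((m : ℝ) / w ^ 2) := by positivity
      linarith
    calc _ ≤ κ / (2 * π) * ((B + (B + C) * (κ ^ 2 / 2)) * (1 / m + m / w ^ 2)) := by
          gcongr
          exact e2.trans f3
      _ = _ := by rw [hB']; ring
  have hfin := inv_sq_expansion (by positivity) hm1 hm3
    (abs_sub_le_of_bootstrap hB'0 hm1 hm2 hw0 hwB hkey)
  have e4 : g m - κ ^ 2 / (2 * (m : ℝ) ^ 2) * (1 + κ * lam / (π * (m : ℝ)) - 2 * c / (m : ℝ))
      = κ ^ 2 / 2 * (1 / w ^ 2 - (1 - 2 * d / m) / (m : ℝ) ^ 2) := by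
    rw [hgw, hd]
    field_simp
    ring
  rw [e4, abs_mul, abs_of_pos (by positivity : 0 < κ ^ 2 / 2)]
  calc _ ≤ κ ^ 2 / 2 * ((16 * d ^ 2 + 32 * A) / (m : ℝ) ^ 4) := by gcongr
    _ = κ ^ 2 / 2 * (16 * d ^ 2 + 32 * A) / (m : ℝ) ^ 4 := by ring
    _ ≤ _ := by gcongr; linarith

lemma abs_sqrt_sub_le {Y x : ℝ} (hY : 0 ≤ Y) (hx : 0 < x) :
    |√Y - x| ≤ |Y - x ^ 2| / x := by
  have h0 := Real.sqrt_nonneg Y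
  have h : Y - x ^ 2 = (√Y - x) * (√Y + x) := by
    nlinarith [Real.sq_sqrt hY]
  rw [le_div_iff₀ hx, h, abs_mul, abs_of_pos (by positivity : 0 < √Y + x)]
  gcongr
  linarith

set_option maxHeartbeats 1000000 in
/-- asymptotics of the boundaries `Γ̃_m < γ̃_m` of the non-resonant set
`C̃_{E,ν}`, defined by the implicit equations
`√(κ² + 4Γ̃_m)/√((m+1)² - ν(m+1)) = √(Γ̃_m) ω₀(E,Γ̃_m)` and
`κ/√(m² + νm) = √(γ̃_m) ω₀(E,γ̃_m)`, where `ω₀(E,γ) = 2πγ^{-1/2}/T(E,γ)` and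
`T(E,γ) = √2πγ^{-1/2} + λ(E) + O(γ)`. -/
theorem stmt8
    (V : ℝ → ℝ) (VL Vinf a0 κ : ℝ)
    (hV : ContDiff ℝ 2 V) (hVeven : ∀ x, V (-x) = V x)
    (hVnonneg : ∀ x, 0 ≤ V x) (hVle : ∀ x, V x ≤ VL) (hVL : 0 < VL)
    (ha0 : 0 < a0) (hVinf : 0 < Vinf) (hVinfL : Vinf ≤ VL)
    (hVconst : ∀ x : ℝ, a0 ≤ |x| → V x = Vinf)
    (hκ : 0 < κ)
    (htaylor : ∃ K > (0:ℝ), ∃ r > (0:ℝ), ∀ x : ℝ, |x| ≤ r →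
      |V x - κ ^ 2 * x ^ 2 / 2| ≤ K * x ^ 6)
    (E ν : ℝ) (hE : VL < E) (hν : ν ∈ Set.Ioo (0:ℝ) 1)
    -- λ(E) = 2√2 (∫₀^{a₀} (E - V)^{-1/2} - a₀ (E - V_∞)^{-1/2})
    (lam : ℝ)
    (hlam : lam = 2 * Real.sqrt 2 * ((∫ s in (0:ℝ)..a0, 1 / Real.sqrt (E - V s))
      - a0 / Real.sqrt (E - Vinf)))
    -- the period function T(E,·) with its expansion, and ω₀(E,·)
    (T ω₀ : ℝ → ℝ) (hTpos : ∀ γ : ℝ, 0 < γ → 0 < T γ)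
    (hT : ∃ C > (0:ℝ), ∃ γ' > (0:ℝ), ∀ γ ∈ Set.Ioo (0:ℝ) γ',
      |T γ - (Real.sqrt 2 * π / Real.sqrt γ + lam)| ≤ C * γ)
    (hω₀ : ∀ γ : ℝ, 0 < γ → ω₀ γ = 2 * π / (Real.sqrt γ * T γ))
    -- the sequences Γ̃_m, γ̃_m of small solutions of the implicit equations
    (Γt γt : ℕ → ℝ) (m₀ : ℕ)
    (hpos : ∀ m ≥ m₀, 0 < Γt m ∧ 0 < γt m)
    (hsmall : Filter.Tendsto Γt Filter.atTop (nhds 0) ∧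
      Filter.Tendsto γt Filter.atTop (nhds 0))
    (hΓeq : ∀ m ≥ m₀, Real.sqrt (κ ^ 2 + 4 * Γt m)
      / Real.sqrt (((m : ℝ) + 1) ^ 2 - ν * ((m : ℝ) + 1))
      = Real.sqrt (Γt m) * ω₀ (Γt m))
    (hγeq : ∀ m ≥ m₀, κ / Real.sqrt ((m : ℝ) ^ 2 + ν * (m : ℝ))
      = Real.sqrt (γt m) * ω₀ (γt m)) :
    ∃ C > (0:ℝ), ∃ m₁ : ℕ, ∀ m : ℕ, m₁ ≤ m →
      |Γt m - κ ^ 2 / (2 * (m : ℝ) ^ 2)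
          * (1 + κ * lam / (π * (m : ℝ)) - (2 - ν) / (m : ℝ))| ≤ C / (m : ℝ) ^ 4 ∧
      |γt m - κ ^ 2 / (2 * (m : ℝ) ^ 2)
          * (1 + κ * lam / (π * (m : ℝ)) - ν / (m : ℝ))| ≤ C / (m : ℝ) ^ 4 ∧
      Γt m < γt m ∧ |γt m - Γt m| ≤ C / (m : ℝ) ^ 3 := by
  obtain ⟨hν0, hν1⟩ := hν
  have hπ := Real.pi_pos
  have hge : ∀ᶠ m : ℕ in Filter.atTop, m₀ ≤ m := Filter.eventually_ge_atTop m₀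
  have hbig : ∀ M : ℝ, ∀ᶠ m : ℕ in Filter.atTop, M ≤ (m : ℝ) := fun M =>
    tendsto_natCast_atTop_atTop.eventually_ge_atTop M
  have hfreq : ∀ γ : ℝ, 0 < γ → √γ * ω₀ γ = 2 * π / T γ := by
    intro γ hγ
    have := Real.sqrt_pos.2 hγ
    have := hTpos γ hγ
    rw [hω₀ γ hγ]
    field_simp
  have hγT : ∀ᶠ m : ℕ in Filter.atTop,
      |T (γt m) - 2 * π / κ * (m + ν / 2)| ≤ 2 * π / κ * (1 / m + m * γt m) := by
    filter_upwards [hge, hbig 1] with m hm hm1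
    have hm0 : (0:ℝ) < m := by linarith
    have hp := (hpos m hm).2
    have hTp := hTpos _ hp
    have hY : (0:ℝ) < (m:ℝ) ^ 2 + ν * m := by positivity
    have hsY := Real.sqrt_pos.2 hY
    have h := hγeq m hm
    rw [hfreq _ hp, div_eq_div_iff hsY.ne' hTp.ne'] at h
    have hTe : T (γt m) - 2 * π / κ * (m + ν / 2)
        = 2 * π / κ * (√((m:ℝ) ^ 2 + ν * m) - (m + ν / 2)) := by
      have : T (γt m) = 2 * π * √((m:ℝ) ^ 2 + ν * m) / κ := by
        rw [eq_div_iff hκ.ne']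
        linarith
      rw [this]
      ring
    have hs := abs_sqrt_sub_le hY.le (by positivity : 0 < (m:ℝ) + ν / 2)
    have hs' : |(m:ℝ) ^ 2 + ν * m - (m + ν / 2) ^ 2| / (m + ν / 2) ≤ 1 / m := by
      have : (m:ℝ) ^ 2 + ν * m - (m + ν / 2) ^ 2 = - (ν ^ 2 / 4) := by ring
      rw [this, abs_neg, abs_of_nonneg (by positivity)]
      gcongr
      · nlinarith
      · linarith
    rw [hTe, abs_mul, abs_of_pos (by positivity : 0 < 2 * π / κ)]
    gcongr
    have : 0 ≤ m * γt m := by positivity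
    linarith
  have hΓT : ∀ᶠ m : ℕ in Filter.atTop,
      |T (Γt m) - 2 * π / κ * (m + (1 - ν / 2))|
        ≤ 2 * π / κ * (1 + 4 / κ ^ 2) * (1 / m + m * Γt m) := by
    filter_upwards [hge, hbig 1] with m hm hm1
    have hm0 : (0:ℝ) < m := by linarith
    have hp := (hpos m hm).1
    have hTp := hTpos _ hp
    set Y : ℝ := ((m:ℝ) + 1) ^ 2 - ν * ((m:ℝ) + 1) with hYdef
    have hY : 0 < Y := by rw [hYdef]; nlinarith
    have hsY := Real.sqrt_pos.2 hY
    have hsY2 : √Y ≤ 2 * m := by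
      rw [Real.sqrt_le_left (by positivity), hYdef]
      nlinarith
    set q : ℝ := √(κ ^ 2 + 4 * Γt m) with hq
    have hq2 : q ^ 2 = κ ^ 2 + 4 * Γt m := Real.sq_sqrt (by positivity)
    have hκq : κ ≤ q := Real.le_sqrt_of_sq_le (by linarith)
    have hq0 : 0 < q := by linarith
    have h := hΓeq m hm
    rw [hfreq _ hp, div_eq_div_iff hsY.ne' hTp.ne'] at h
    have hTe : T (Γt m) - 2 * π / κ * (m + (1 - ν / 2))
        = 2 * π / κ * ((√Y - (m + (1 - ν / 2))) - √Y * ((q - κ) / q)) := by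
      have : T (Γt m) = 2 * π * √Y / q := by
        rw [eq_div_iff hq0.ne']
        linarith
      rw [this]
      field_simp
      ring
    have hx : (m:ℝ) ≤ m + (1 - ν / 2) := by linarith
    have hs := abs_sqrt_sub_le hY.le (by linarith : 0 < (m:ℝ) + (1 - ν / 2))
    have hs' : |Y - (m + (1 - ν / 2)) ^ 2| / (m + (1 - ν / 2)) ≤ 1 / m := by
      have : Y - (m + (1 - ν / 2)) ^ 2 = - (ν ^ 2 / 4) := by rw [hYdef]; ring
      rw [this, abs_neg, abs_of_nonneg (by positivity)]
      gcongr
      nlinarith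
    have hqq : (q - κ) / q ≤ 2 / κ ^ 2 * Γt m := by
      -- `q - κ = 4Γ/(q + κ)` with `q ≥ κ`
      rw [div_mul_eq_mul_div, div_le_div_iff₀ hq0 (by positivity)]
      have h1 : (q - κ) * (q + κ) = 4 * Γt m := by linarith [hq2]
      have h2 : (q - κ) * (2 * κ) ≤ 4 * Γt m := by nlinarith
      nlinarith
    have hqq0 : 0 ≤ (q - κ) / q := div_nonneg (by linarith) hq0.le
    have hb : |√Y * ((q - κ) / q)| ≤ 4 / κ ^ 2 * (m * Γt m) := by
      rw [abs_of_nonneg (by positivity)]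
      calc _ ≤ (2 * m) * (2 / κ ^ 2 * Γt m) := by gcongr
        _ = _ := by ring
    rw [hTe, abs_mul, abs_of_pos (by positivity : 0 < 2 * π / κ), mul_assoc]
    gcongr
    refine (abs_sub _ _).trans ?_
    have f1 : 0 ≤ 4 / κ ^ 2 * (1 / (m : ℝ)) := by positivity
    have f2 : 0 ≤ (m : ℝ) * Γt m := by positivity
    linarith
  obtain ⟨K₁, hK₁, h₁⟩ := period_inversion hκ hT (hge.mono fun m hm => (hpos m hm).1) hsmall.1
    (by positivity) hΓT
  obtain ⟨K₂, hK₂, h₂⟩ := period_inversion hκ hT (hge.mono fun m hm => (hpos m hm).2) hsmall.2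
    (by positivity) hγT
  have hgap : 0 < κ ^ 2 * (1 - ν) := mul_pos (by positivity) (by linarith)
  have hev := (h₁.and h₂).and ((hbig 1).and (hbig ((K₁ + K₂ + 1) / (κ ^ 2 * (1 - ν)))))
  obtain ⟨m₁, hm₁⟩ := Filter.eventually_atTop.1 hev
  refine ⟨K₁ + K₂ + κ ^ 2 * (1 - ν), by positivity, m₁, fun m hm => ?_⟩
  obtain ⟨⟨h₁, h₂⟩, hm1, hm2⟩ := hm₁ m hm
  have hm0 : (0:ℝ) < m := by linarith
  rw [show 2 * (1 - ν / 2) = 2 - ν by ring] at h₁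
  rw [show 2 * (ν / 2) = ν by ring] at h₂
  -- The difference of the two expansions is exactly `κ²(1-ν)/m³`, and the error terms are smaller.
  have hdiff : κ ^ 2 / (2 * (m : ℝ) ^ 2) * (1 + κ * lam / (π * (m : ℝ)) - ν / (m : ℝ))
      - κ ^ 2 / (2 * (m : ℝ) ^ 2) * (1 + κ * lam / (π * (m : ℝ)) - (2 - ν) / (m : ℝ))
      = κ ^ 2 * (1 - ν) / (m : ℝ) ^ 3 := by
    field_simp
    ring
  have herr : K₁ / (m : ℝ) ^ 4 + K₂ / (m : ℝ) ^ 4 < κ ^ 2 * (1 - ν) / (m : ℝ) ^ 3 := by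
    rw [← add_div, div_lt_div_iff₀ (by positivity) (by positivity)]
    rw [div_le_iff₀ hgap] at hm2
    have : (K₁ + K₂) * (m : ℝ) ^ 3 < m * (κ ^ 2 * (1 - ν)) * (m : ℝ) ^ 3 := by
      gcongr
      linarith
    linarith
  have herr' : K₁ / (m : ℝ) ^ 4 + K₂ / (m : ℝ) ^ 4 ≤ (K₁ + K₂) / (m : ℝ) ^ 3 := by
    rw [← add_div]
    gcongr
    norm_num
  have a₁ := abs_le.1 h₁
  have a₂ := abs_le.1 h₂
  have hlt : Γt m < γt m := by linarith [a₁.2, a₂.1]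
  refine ⟨h₁.trans ?_, h₂.trans ?_, hlt, ?_⟩
  · exact div_le_div_of_nonneg_right (by linarith) (by positivity)
  · exact div_le_div_of_nonneg_right (by linarith) (by positivity)
  · rw [abs_of_pos (by linarith), add_div]
    linarith [a₁.1, a₂.2]
end

section
/- Fix E > V_L and ν ∈ (0,1), and let γ belong to the set C̃_{E,ν} = ∪_{m≥m₀}(Γ̃_m, γ̃_m), where Γ̃_m, γ̃_m are defined by √(κ²+4Γ̃_m)/√((m+1)²−ν(m+1)) = √(Γ̃_m) ω₀(E,Γ̃_m) and κ/√(m²+νm) = √(γ̃_m) ω₀(E,γ̃_m). Then for all sufficiently small γ ∈ C̃_{E,ν}, the quantity M(n,q) = κ² − n²ω₀(E,γ)²γ + 2γ(1 − cos q) satisfies inf_{n∈ℤ, q∈[−π,π]} |M(n,q)| ≥ (νκ/2) γ^{1/2}. -/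
open Real

/-!
Write `Ω γ = √γ ω₀ γ = 2π / T γ`, so that `M(n,q) = κ² - n² (Ω γ)² + 2γ(1 - cos q)`, and put `t = √γ`.

The expansion `T = √2 π / t + lam + O(t²)` gives `t ≤ Ω ≤ 2t` for small `t` (`freq_bounds`).
Since `√2 π / t` is decreasing in `t`, it also makes `Ω²` increasing in `γ` up to an error `O(t⁵)`
(`freq_sq_almost_mono`). For `Γ̃_m < γ < γ̃_m` this bounds `(Ω γ)²` from above by
`(Ω γ̃_m)² = κ² / (m² + ν m)` and from below by
`(Ω Γ̃_m)² = (κ² + 4 Γ̃_m) / ((m+1)² - ν (m+1))`, up to `O(t⁵)`; moreover `m √γ̃_m ≤ κ`.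
Hence `m² (Ω γ)² ≤ κ² - κ² ν / (m+1) + O(t³)`, which treats `|n| ≤ m`, and
`(m+1)² (Ω γ)² ≥ κ² + κ² ν / (m+1) - O(t³)`, which treats `|n| ≥ m + 1` because the term
`2γ(1 - cos q)` is at most `4t²`. Finally `κ / (m+1) ≥ (3/4) κ / m ≥ (3/4) t` once `m ≥ 3`, and the gap
between `3/4` and `1/2` absorbs the errors when `m` is large. Each of the finitely many remaining
`m` is excluded by taking `γ₀` below the corresponding `Γ̃_m > 0`.
-/

/-- For `t = √γ` small, the frequency `2π / T` is comparable to `t`. -/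
lemma freq_bounds {C lam t T : ℝ} (ht : 0 < t)
    (hT : |T - (√2 * π / t + lam)| ≤ C * t ^ 2) (hsm : |lam| * t + C * t ^ 3 ≤ 1) :
    0 < T ∧ t ≤ 2 * π / T ∧ 2 * π / T ≤ 2 * t := by
  have hπ := Real.pi_gt_three
  have h2 : (7 / 5 : ℝ) ≤ √2 := Real.le_sqrt_of_sq_le (by norm_num)
  have h2' : √2 ≤ (3 / 2 : ℝ) := by
    rw [Real.sqrt_le_left (by norm_num)]; norm_num
  obtain ⟨h3, h4⟩ := abs_le.1 hT
  have hl := mul_le_mul_of_nonneg_right (le_abs_self lam) ht.le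
  have hl' := mul_le_mul_of_nonneg_right (neg_abs_le lam) ht.le
  have e : √2 * π / t * t = √2 * π := div_mul_cancel₀ _ ht.ne'
  have h5 := mul_le_mul_of_nonneg_right h3 ht.le
  have h6 := mul_le_mul_of_nonneg_right h4 ht.le
  have h7 : (7 / 5) * π ≤ √2 * π := by gcongr
  have h8 : √2 * π ≤ (3 / 2) * π := by gcongr
  have lo : π ≤ T * t := by nlinarith
  have hi : T * t ≤ 2 * π := by nlinarith
  have hTp : 0 < T := pos_of_mul_pos_left (by linarith) ht.le
  refine ⟨hTp, ?_, ?_⟩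
  · rw [le_div_iff₀ hTp]; linarith
  · rw [div_le_iff₀ hTp]; linarith

/-- The squared frequency is increasing in `t = √γ` up to an error of order `t⁵`. -/
lemma freq_sq_almost_mono {C lam s t S T : ℝ} (hC : 0 < C) (hs : 0 < s) (hst : s ≤ t)
    (hS : |S - (√2 * π / s + lam)| ≤ C * s ^ 2) (hT : |T - (√2 * π / t + lam)| ≤ C * t ^ 2)
    (hsm : |lam| * t + C * t ^ 3 ≤ 1) :
    (2 * π / S) ^ 2 ≤ (2 * π / T) ^ 2 + 16 * C * t ^ 5 := by
  have ht : 0 < t := hs.trans_le hst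
  have hsms : |lam| * s + C * s ^ 3 ≤ 1 := by
    refine le_trans ?_ hsm
    gcongr
  obtain ⟨hSp, _, a2⟩ := freq_bounds hs hS hsms
  obtain ⟨hTp, _, b2⟩ := freq_bounds ht hT hsm
  have hπ := Real.pi_gt_three
  have hTS : T - S ≤ 2 * C * t ^ 2 := by
    have h1 := (abs_le.1 hS).1
    have h2 := (abs_le.1 hT).2
    have h3 : √2 * π / t ≤ √2 * π / s := by gcongr
    have h4 : C * s ^ 2 ≤ C * t ^ 2 := by gcongr
    linarith
  have hab : 2 * π / S - 2 * π / T = (2 * π / S) * (2 * π / T) * ((T - S) / (2 * π)) := by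
    field_simp
  set a := 2 * π / S
  set b := 2 * π / T
  have ha : 0 < a := by positivity
  have hb : 0 < b := by positivity
  have h1 : (T - S) / (2 * π) ≤ C * t ^ 2 := by
    rw [div_le_iff₀ (by positivity)]
    have : 0 < C * t ^ 2 := by positivity
    nlinarith
  have h2 : a - b ≤ 4 * C * t ^ 4 := by
    rw [hab]
    calc a * b * ((T - S) / (2 * π)) ≤ a * b * (C * t ^ 2) := by gcongr
      _ ≤ (2 * t) * (2 * t) * (C * t ^ 2) := by gcongr; linarith
      _ = _ := by ring
  have h3 : (a + b) * (a - b) ≤ (4 * t) * (4 * C * t ^ 4) :=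
    calc (a + b) * (a - b) ≤ (a + b) * (4 * C * t ^ 4) := by gcongr
      _ ≤ _ := by gcongr; linarith
  nlinarith

set_option maxHeartbeats 800000 in
/-- The lower bound for a single `m`. Here `r = √Γ̃_m`, `t = √γ`, `u = √γ̃_m`, while `R`, `T`, `U`
are the corresponding periods and `c = 1 - cos q`. -/
lemma gap_bound {κ ν C lam r t u R T U c : ℝ} {m : ℕ} (hκ : 0 < κ) (hν : 0 < ν) (hν1 : ν < 1)
    (hC : 0 < C) (hm : 3 ≤ m) (hr : 0 < r) (hrt : r ≤ t) (htu : t ≤ u)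
    (hR : |R - (√2 * π / r + lam)| ≤ C * r ^ 2) (hT : |T - (√2 * π / t + lam)| ≤ C * t ^ 2)
    (hU : |U - (√2 * π / u + lam)| ≤ C * u ^ 2)
    (hsm : |lam| * u + C * u ^ 3 ≤ 1) (hsm' : 64 * C * κ ^ 2 * u ^ 2 + 4 * u ≤ κ * ν / 4)
    (eR : (2 * π / R) ^ 2 = (κ ^ 2 + 4 * r ^ 2) / (((m : ℝ) + 1) ^ 2 - ν * ((m : ℝ) + 1)))
    (eU : (2 * π / U) ^ 2 = κ ^ 2 / ((m : ℝ) ^ 2 + ν * (m : ℝ)))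
    (hc0 : 0 ≤ c) (hc2 : c ≤ 2) (n : ℤ) :
    ν * κ / 2 * t ≤ |κ ^ 2 - (n : ℝ) ^ 2 * (2 * π / T) ^ 2 + 2 * t ^ 2 * c| := by
  have ht : 0 < t := hr.trans_le hrt
  have hu : 0 < u := ht.trans_le htu
  have hm3 : (3 : ℝ) ≤ m := by exact_mod_cast hm
  have hsmt : |lam| * t + C * t ^ 3 ≤ 1 := by
    refine le_trans ?_ hsm
    gcongr
  have m1 := freq_sq_almost_mono hC hr hrt hR hT hsmt
  have m2 := freq_sq_almost_mono hC ht htu hT hU hsm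
  obtain ⟨_, u1, _⟩ := freq_bounds hu hU hsm
  have hmu : (m : ℝ) * u ≤ κ := by
    have h1 : u ^ 2 ≤ κ ^ 2 / ((m : ℝ) ^ 2 + ν * (m : ℝ)) := by
      rw [← eU]; gcongr
    rw [le_div_iff₀ (by positivity)] at h1
    have : 0 ≤ u ^ 2 * (ν * m) := by positivity
    exact abs_le_of_sq_le_sq' (by nlinarith) hκ.le |>.2
  have hgap : 3 / 4 * κ * ν * u ≤ κ ^ 2 * ν / (m + 1) := by
    rw [le_div_iff₀ (by positivity)]
    have h1 : 3 / 4 * (u * (m + 1)) ≤ κ := by nlinarith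
    have h2 := mul_le_mul_of_nonneg_left h1 (by positivity : 0 ≤ κ * ν)
    linarith
  set A := (2 * π / T) ^ 2
  have hA : 0 ≤ A := by positivity
  have hνκ : ν * κ / 2 * t ≤ ν * κ / 2 * u := by gcongr
  have hsmu := mul_le_mul_of_nonneg_right hsm' hu.le
  rcases le_or_gt |n| (m : ℤ) with hn | hn
  · have hn' : (n : ℝ) ^ 2 ≤ (m : ℝ) ^ 2 := by
      have : |(n : ℝ)| ≤ m := by exact_mod_cast hn
      rw [← sq_abs (n : ℝ)]; gcongr
    have h1 : (n : ℝ) ^ 2 * A ≤ (m : ℝ) ^ 2 * (κ ^ 2 / ((m : ℝ) ^ 2 + ν * m) + 16 * C * u ^ 5) := by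
      rw [← eU]; gcongr
    have h2 : (m : ℝ) ^ 2 * (κ ^ 2 / ((m : ℝ) ^ 2 + ν * m)) ≤ κ ^ 2 - κ ^ 2 * ν / (m + 1) := by
      have e : (m : ℝ) ^ 2 * (κ ^ 2 / ((m : ℝ) ^ 2 + ν * m)) = κ ^ 2 - κ ^ 2 * ν / (m + ν) := by
        field_simp
        ring
      have : κ ^ 2 * ν / (m + 1) ≤ κ ^ 2 * ν / (m + ν) := by gcongr
      linarith
    have h3 : (m : ℝ) ^ 2 * (16 * C * u ^ 5) ≤ 16 * C * κ ^ 2 * u ^ 3 := by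
      calc (m : ℝ) ^ 2 * (16 * C * u ^ 5) = 16 * C * (m * u) ^ 2 * u ^ 3 := by ring
        _ ≤ _ := by gcongr
    have h4 : 0 ≤ C * κ ^ 2 * u ^ 3 := by positivity
    have h5 : 0 ≤ t ^ 2 * c := by positivity
    refine le_trans ?_ (le_abs_self _)
    linarith [sq_nonneg u]
  · have hn' : ((m : ℝ) + 1) ^ 2 ≤ (n : ℝ) ^ 2 := by
      have : (m : ℝ) + 1 ≤ |(n : ℝ)| := by exact_mod_cast hn
      rw [← sq_abs (n : ℝ)]; gcongr
    have h1 : ((m : ℝ) + 1) ^ 2 * A ≤ (n : ℝ) ^ 2 * A := by gcongr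
    have hden : 0 < (m : ℝ) + 1 - ν := by linarith
    have h2 : κ ^ 2 + κ ^ 2 * ν / (m + 1) ≤ ((m : ℝ) + 1) ^ 2 * (2 * π / R) ^ 2 := by
      have e : ((m : ℝ) + 1) ^ 2 * (κ ^ 2 / (((m : ℝ) + 1) * ((m : ℝ) + 1 - ν)))
          = κ ^ 2 + κ ^ 2 * ν / (m + 1 - ν) := by
        field_simp
        ring
      have h3 : κ ^ 2 * ν / (m + 1) ≤ κ ^ 2 * ν / (m + 1 - ν) := by
        gcongr; linarith
      have h4 : ((m : ℝ) + 1) ^ 2 * (κ ^ 2 / (((m : ℝ) + 1) * ((m : ℝ) + 1 - ν)))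
          ≤ ((m : ℝ) + 1) ^ 2 * ((κ ^ 2 + 4 * r ^ 2) / (((m : ℝ) + 1) * ((m : ℝ) + 1 - ν))) := by
        gcongr
        linarith [sq_nonneg r]
      rw [eR, show ((m : ℝ) + 1) ^ 2 - ν * ((m : ℝ) + 1) = ((m : ℝ) + 1) * ((m : ℝ) + 1 - ν) by ring]
      linarith
    have h3 : ((m : ℝ) + 1) ^ 2 * (2 * π / R) ^ 2 ≤ ((m : ℝ) + 1) ^ 2 * (A + 16 * C * t ^ 5) := by
      gcongr
    have h4 : ((m : ℝ) + 1) ^ 2 * (16 * C * t ^ 5) ≤ 64 * C * κ ^ 2 * u ^ 3 := by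
      calc ((m : ℝ) + 1) ^ 2 * (16 * C * t ^ 5) ≤ ((m : ℝ) + m) ^ 2 * (16 * C * u ^ 5) := by
            gcongr; linarith
        _ = 64 * C * (m * u) ^ 2 * u ^ 3 := by ring
        _ ≤ _ := by gcongr
    have h5 : 2 * t ^ 2 * c ≤ 2 * u ^ 2 * 2 := by gcongr
    refine le_trans ?_ (neg_le_abs _)
    linarith

/-- for `γ` sufficiently small in the non-resonant set
`C̃_{E,ν} = ∪_{m ≥ m₀}(Γ̃_m, γ̃_m)`, the quantity
`M(n,q) = κ² - n²ω₀(E,γ)²γ + 2γ(1 - cos q)` satisfies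
`inf_{n ∈ ℤ, q ∈ [-π,π]} |M(n,q)| ≥ (νκ/2)√γ`. -/
theorem stmt9
    (V : ℝ → ℝ) (VL Vinf a0 κ : ℝ)
    (hV : ContDiff ℝ 2 V) (hVeven : ∀ x, V (-x) = V x)
    (hVnonneg : ∀ x, 0 ≤ V x) (hVle : ∀ x, V x ≤ VL) (hVL : 0 < VL)
    (ha0 : 0 < a0) (hVinf : 0 < Vinf) (hVinfL : Vinf ≤ VL)
    (hVconst : ∀ x : ℝ, a0 ≤ |x| → V x = Vinf)
    (hκ : 0 < κ)
    (htaylor : ∃ K > (0:ℝ), ∃ r > (0:ℝ), ∀ x : ℝ, |x| ≤ r →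
      |V x - κ ^ 2 * x ^ 2 / 2| ≤ K * x ^ 6)
    (E ν : ℝ) (hE : VL < E) (hν : ν ∈ Set.Ioo (0:ℝ) 1)
    (lam : ℝ)
    (hlam : lam = 2 * Real.sqrt 2 * ((∫ s in (0:ℝ)..a0, 1 / Real.sqrt (E - V s))
      - a0 / Real.sqrt (E - Vinf)))
    (T ω₀ : ℝ → ℝ) (hTpos : ∀ γ : ℝ, 0 < γ → 0 < T γ)
    (hT : ∃ C > (0:ℝ), ∃ γ' > (0:ℝ), ∀ γ ∈ Set.Ioo (0:ℝ) γ',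
      |T γ - (Real.sqrt 2 * π / Real.sqrt γ + lam)| ≤ C * γ)
    (hω₀ : ∀ γ : ℝ, 0 < γ → ω₀ γ = 2 * π / (Real.sqrt γ * T γ))
    (Γt γt : ℕ → ℝ) (m₀ : ℕ)
    (hpos : ∀ m ≥ m₀, 0 < Γt m ∧ 0 < γt m)
    (hsmall : Filter.Tendsto Γt Filter.atTop (nhds 0) ∧
      Filter.Tendsto γt Filter.atTop (nhds 0))
    (hΓeq : ∀ m ≥ m₀, Real.sqrt (κ ^ 2 + 4 * Γt m)
      / Real.sqrt (((m : ℝ) + 1) ^ 2 - ν * ((m : ℝ) + 1))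
      = Real.sqrt (Γt m) * ω₀ (Γt m))
    (hγeq : ∀ m ≥ m₀, κ / Real.sqrt ((m : ℝ) ^ 2 + ν * (m : ℝ))
      = Real.sqrt (γt m) * ω₀ (γt m)) :
    ∃ γ₀ > (0:ℝ), ∀ m : ℕ, m₀ ≤ m → ∀ γ ∈ Set.Ioo (Γt m) (γt m), γ < γ₀ →
      ∀ n : ℤ, ∀ q ∈ Set.Icc (-π) π,
        ν * κ / 2 * Real.sqrt γ
          ≤ |κ ^ 2 - (n : ℝ) ^ 2 * (ω₀ γ) ^ 2 * γ + 2 * γ * (1 - Real.cos q)| := by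
  obtain ⟨hν0, hν1⟩ := hν
  obtain ⟨C, hC, γ', hγ', hT⟩ := hT
  have hsq : ∀ γ : ℝ, 0 < γ → √γ * ω₀ γ = 2 * π / T γ := by
    intro γ hγ
    have h1 := Real.sqrt_pos.2 hγ
    have h2 := hTpos γ hγ
    rw [hω₀ γ hγ]
    field_simp
  have hTs : ∀ γ ∈ Set.Ioo (0 : ℝ) γ', |T γ - (√2 * π / √γ + lam)| ≤ C * √γ ^ 2 := by
    intro γ hγ
    rw [Real.sq_sqrt hγ.1.le]
    exact hT γ hγ
  have ev : ∀ᶠ m in Filter.atTop, γt m < γ' ∧ |lam| * √(γt m) + C * √(γt m) ^ 3 < 1 ∧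
      64 * C * κ ^ 2 * √(γt m) ^ 2 + 4 * √(γt m) < κ * ν / 4 := by
    have hlim := hsmall.2
    have c1 : Continuous fun x : ℝ => |lam| * √x + C * √x ^ 3 := by fun_prop
    have c2 : Continuous fun x : ℝ => 64 * C * κ ^ 2 * √x ^ 2 + 4 * √x := by fun_prop
    have l1 := (c1.tendsto 0).comp hlim
    have l2 := (c2.tendsto 0).comp hlim
    refine (hlim.eventually_lt_const hγ').and
      ((l1.eventually_lt_const (by simp)).and (l2.eventually_lt_const ?_))
    simp only [Real.sqrt_zero]
    have : 0 < κ * ν := by positivity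
    linarith
  obtain ⟨N, hN⟩ := Filter.eventually_atTop.1 ev
  -- A positive lower bound for the finitely many `Γt m` with `m < max N 3`.
  obtain ⟨γ₀, hγ₀, hmin⟩ : ∃ γ₀ > (0 : ℝ), ∀ m, m₀ ≤ m → m < max N 3 → γ₀ ≤ Γt m := by
    generalize max N 3 = k
    induction k with
    | zero => exact ⟨1, one_pos, fun m _ h => absurd h (Nat.not_lt_zero m)⟩
    | succ k ih =>
      obtain ⟨g, hg, h⟩ := ih
      by_cases hk : m₀ ≤ k
      · refine ⟨min g (Γt k), lt_min hg (hpos k hk).1, fun m hm hmk => ?_⟩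
        rcases Nat.lt_succ_iff_lt_or_eq.1 hmk with h' | rfl
        · exact (min_le_left _ _).trans (h m hm h')
        · exact min_le_right _ _
      · exact ⟨g, hg, fun m hm hmk => h m hm (by omega)⟩
  refine ⟨γ₀, hγ₀, fun m hm γ hγ hlt n q _ => ?_⟩
  have hmN : max N 3 ≤ m := by
    by_contra! hcon
    exact absurd (hmin m hm hcon) (not_le.2 (hγ.1.trans hlt))
  have hm3 : 3 ≤ m := (le_max_right _ _).trans hmN
  have hm3' : (3 : ℝ) ≤ m := by exact_mod_cast hm3
  obtain ⟨n1, n2, n3⟩ := hN m ((le_max_left _ _).trans hmN)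
  obtain ⟨hΓ0, hγ0⟩ := hpos m hm
  obtain ⟨hγl, hγr⟩ := hγ
  have hγp : 0 < γ := hΓ0.trans hγl
  have eR : (2 * π / T (Γt m)) ^ 2
      = (κ ^ 2 + 4 * √(Γt m) ^ 2) / (((m : ℝ) + 1) ^ 2 - ν * ((m : ℝ) + 1)) := by
    rw [← hsq _ hΓ0, ← hΓeq m hm, div_pow, Real.sq_sqrt (by positivity), Real.sq_sqrt (by nlinarith),
      Real.sq_sqrt hΓ0.le]
  have eU : (2 * π / T (γt m)) ^ 2 = κ ^ 2 / ((m : ℝ) ^ 2 + ν * (m : ℝ)) := by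
    rw [← hsq _ hγ0, ← hγeq m hm, div_pow, Real.sq_sqrt (by positivity)]
  have key := gap_bound hκ hν0 hν1 hC hm3 (Real.sqrt_pos.2 hΓ0) (Real.sqrt_le_sqrt hγl.le)
    (Real.sqrt_le_sqrt hγr.le) (hTs _ ⟨hΓ0, hγl.trans (hγr.trans n1)⟩)
    (hTs _ ⟨hγp, hγr.trans n1⟩) (hTs _ ⟨hγ0, n1⟩) n2.le n3.le eR eU
    (sub_nonneg.2 (Real.cos_le_one q)) (by linarith [Real.neg_one_le_cos q]) n
  rw [← hsq γ hγp, mul_pow, Real.sq_sqrt hγp.le] at key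
  rwa [mul_assoc ((n : ℝ) ^ 2), mul_comm (ω₀ γ ^ 2)]
end

section
/- Let {a_n}_{n≥2} be a bounded sequence of nonnegative real numbers and let θ > 0 with 2θ < 1. If a_n ≤ θ(a_{n+1} + a_{n−1}) for all n ≥ 3, then a_n ≤ (2θ)^{n−2} a₂ for all n ≥ 2. -/
/-!
The sequence is nonincreasing: its tail from `m` on obeys a maximum principle with boundary
value `a m`. Indeed, a bound `a n ≤ a m + C` valid for all `n ≥ m` improves itself, through the
recursive inequality, to `a n ≤ a m + 2θC`; starting from `C = M` and iterating, the excess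
`(2θ)^k M` tends to `0`. Monotonicity turns the hypothesis into `a (n + 1) ≤ 2θ a n`, which
iterates to the geometric bound.
-/

/-- discrete maximum principle: if `{a_n}_{n ≥ 2}` is a bounded sequence
of nonnegative reals, `θ > 0`, `2θ < 1`, and `a_n ≤ θ(a_{n+1} + a_{n-1})` for all
`n ≥ 3`, then `a_n ≤ (2θ)^{n-2} a₂` for all `n ≥ 2`. -/
theorem stmt13 (a : ℕ → ℝ) (θ : ℝ) (hθ : 0 < θ) (hθ2 : 2 * θ < 1)
    (hbdd : ∃ M : ℝ, ∀ n : ℕ, 2 ≤ n → a n ≤ M)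
    (hnonneg : ∀ n : ℕ, 2 ≤ n → 0 ≤ a n)
    (hrec : ∀ n : ℕ, 3 ≤ n → a n ≤ θ * (a (n + 1) + a (n - 1))) :
    ∀ n : ℕ, 2 ≤ n → a n ≤ (2 * θ) ^ (n - 2) * a 2 := by
  obtain ⟨M, hM⟩ := hbdd
  have hM0 : 0 ≤ M := (hnonneg 2 le_rfl).trans (hM 2 le_rfl)
  have key : ∀ m, 2 ≤ m → ∀ k n, m ≤ n → a n ≤ a m + (2 * θ) ^ k * M := by
    intro m hm k
    induction k with
    | zero =>
      intro n hn
      have h1 := hM n (hm.trans hn)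
      have h2 := hnonneg m hm
      linarith
    | succ k ih =>
      intro n hn
      rcases hn.eq_or_lt with rfl | hlt
      · have : 0 ≤ (2 * θ) ^ (k + 1) * M := by positivity
        linarith
      · calc a n ≤ θ * (a (n + 1) + a (n - 1)) := hrec n (by omega)
          _ ≤ θ * ((a m + (2 * θ) ^ k * M) + (a m + (2 * θ) ^ k * M)) :=
              mul_le_mul_of_nonneg_left
                (add_le_add (ih (n + 1) (by omega)) (ih (n - 1) (by omega))) hθ.le
          _ = 2 * θ * a m + (2 * θ) ^ (k + 1) * M := by ring
          _ ≤ a m + (2 * θ) ^ (k + 1) * M := by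
              have := mul_le_of_le_one_left (hnonneg m hm) hθ2.le
              linarith
  have anti : ∀ m n, 2 ≤ m → m ≤ n → a n ≤ a m := by
    intro m n hm hn
    have hlim : Filter.Tendsto (fun k : ℕ => a m + (2 * θ) ^ k * M) Filter.atTop
        (nhds (a m + 0 * M)) :=
      ((tendsto_pow_atTop_nhds_zero_of_lt_one (by positivity) hθ2).mul_const M).const_add (a m)
    simpa using ge_of_tendsto' hlim fun k => key m hm k n hn
  intro n hn
  induction n, hn using Nat.le_induction with
  | base => simp
  | succ n hn ih =>
    calc a (n + 1) ≤ θ * (a (n + 1 + 1) + a n) := hrec (n + 1) (by omega)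
      _ ≤ θ * (a n + a n) :=
          mul_le_mul_of_nonneg_left (add_le_add_left (anti n (n + 1 + 1) hn (by omega)) _) hθ.le
      _ = 2 * θ * a n := by ring
      _ ≤ 2 * θ * ((2 * θ) ^ (n - 2) * a 2) := mul_le_mul_of_nonneg_left ih (by positivity)
      _ = (2 * θ) ^ (n + 1 - 2) * a 2 := by
          rw [show n + 1 - 2 = n - 2 + 1 by omega]
          ring
end

section
/- Assume (P1),(P3),(P4) on V, fix E > V_L and μ ∈ (0,1/2), and define D_{μ,γ} = { X₀ ∈ H¹_e ∩ C¹_e : ‖X₀‖_{C¹} ≤ 3√E and X₀(τ) ≥ a₀√γ for 0 ≤ τ ≤ T₀/4 − γ^{1/2−μ} }. Then there exists C > 0 such that for all sufficiently small γ > 0 and all X₀ ∈ D_{μ,γ}, ‖V'(γ^{−1/2} X₀)‖_{H¹_e} ≤ C γ^{−1/4−μ/2}. -/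
/-! With `T₀ = √γ T(γ)`, `δ = γ ^ (1/2 - μ)` and `g τ = V'(X₀ τ / √γ)`, the functions `V'` and `V''` are
bounded and vanish on `|x| ≥ a₀` (`exists_bound_of_const_outside`), so `g² + (g')²` is at most a
constant times `1 + 9E/γ` and vanishes wherever `|X₀| ≥ a₀ √γ`. The symmetries of `X₀` carry the
lower bound on `[0, T₀/4 - δ]` to all of `[0, T₀]` except the two intervals of radius `δ` about `T₀/4`
and `3T₀/4` (`SymPer.le_abs`). Hence `‖g‖²_{H¹}` is at most a constant times `δ (1 + 9E/γ)`, which is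
`O(γ ^ (-1/2 - μ))` (`integral_le_of_support`). -/

open Real MeasureTheory Filter

/-- `T₀`-periodicity together with the symmetries `f(-τ) = f(τ) = -f(T₀/2 - τ)`. -/
def SymPer (T₀ : ℝ) (f : ℝ → ℝ) : Prop :=
  Function.Periodic f T₀ ∧ (∀ τ, f (-τ) = f τ) ∧ (∀ τ, f τ = - f (T₀ / 2 - τ))

/-- The `H¹_per(0,T₀)` norm `(∫₀^{T₀} f² + (f')²)^{1/2}`. -/
noncomputable def normH1 (T₀ : ℝ) (f : ℝ → ℝ) : ℝ :=
  Real.sqrt (∫ τ in (0:ℝ)..T₀, (f τ) ^ 2 + (deriv f τ) ^ 2)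

/-- A continuous function vanishing on `a < |x|` with `a > 0` vanishes on `a ≤ |x|`. -/
theorem eq_zero_of_le_abs {h : ℝ → ℝ} (hc : Continuous h) {a : ℝ} (ha : 0 < a)
    (h0 : ∀ x, a < |x| → h x = 0) (x : ℝ) (hx : a ≤ |x|) : h x = 0 := by
  have hx0 : 0 < |x| := ha.trans_le hx
  -- `x` is the limit of `t * x` as `t` decreases to `1`, and `a < |t * x|` for `t > 1`.
  have h1 : Tendsto (fun t : ℝ => h (t * x)) (nhdsWithin 1 (Set.Ioi 1)) (nhds (h (1 * x))) :=
    ((hc.comp (continuous_id.mul continuous_const)).tendsto 1).mono_left nhdsWithin_le_nhds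
  have h2 : Tendsto (fun t : ℝ => h (t * x)) (nhdsWithin 1 (Set.Ioi 1)) (nhds 0) := by
    refine tendsto_const_nhds.congr' ?_
    filter_upwards [self_mem_nhdsWithin] with t ht
    have ht' : (1 : ℝ) < t := ht
    refine (h0 _ ?_).symm
    rw [abs_mul, abs_of_pos (by linarith : (0 : ℝ) < t)]
    nlinarith
  simpa using tendsto_nhds_unique h1 h2

theorem exists_bound_of_eq_zero {h : ℝ → ℝ} (hc : Continuous h) {a : ℝ}
    (h0 : ∀ x, a ≤ |x| → h x = 0) : ∃ M, ∀ x, |h x| ≤ M := by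
  obtain ⟨M, hM⟩ := (isCompact_Icc (a := -a) (b := a)).exists_bound_of_continuousOn hc.continuousOn
  refine ⟨max M 0, fun x => ?_⟩
  by_cases hx : a ≤ |x|
  · simp [h0 x hx]
  · push Not at hx
    exact (hM x (abs_le.1 hx.le)).trans (le_max_left _ _)

/-- A `C²` function that is constant on `a ≤ |x|` has bounded first and second derivatives, both
vanishing on `a ≤ |x|`. -/
theorem exists_bound_of_const_outside {V : ℝ → ℝ} (hV : ContDiff ℝ 2 V) {a c : ℝ} (ha : 0 < a)
    (hVc : ∀ x : ℝ, a ≤ |x| → V x = c) :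
    Differentiable ℝ (deriv V) ∧ ∃ M > 0,
      (∀ x, |deriv V x| ≤ M ∧ |deriv (deriv V) x| ≤ M) ∧
      ∀ x, a ≤ |x| → deriv V x = 0 ∧ deriv (deriv V) x = 0 := by
  have h1 : ContDiff ℝ 1 (deriv V) := by
    have : ContDiff ℝ (1 + 1) V := by simpa [one_add_one_eq_two] using hV
    exact (contDiff_succ_iff_deriv.1 this).2.2
  have hc2 : Continuous (deriv (deriv V)) := h1.continuous_deriv le_rfl
  have hopen : IsOpen {x : ℝ | a < |x|} := isOpen_lt continuous_const continuous_abs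
  have hd1 : ∀ x, a < |x| → deriv V x = 0 := fun x hx => by
    have : V =ᶠ[nhds x] fun _ => c := by
      filter_upwards [hopen.mem_nhds hx] with y hy using hVc y (le_of_lt hy)
    simpa using this.deriv_eq
  have hd2 : ∀ x, a < |x| → deriv (deriv V) x = 0 := fun x hx => by
    have : deriv V =ᶠ[nhds x] fun _ => 0 := by
      filter_upwards [hopen.mem_nhds hx] with y hy using hd1 y hy
    simpa using this.deriv_eq
  have hz1 := eq_zero_of_le_abs h1.continuous ha hd1
  have hz2 := eq_zero_of_le_abs hc2 ha hd2
  obtain ⟨M1, hM1⟩ := exists_bound_of_eq_zero h1.continuous hz1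
  obtain ⟨M2, hM2⟩ := exists_bound_of_eq_zero hc2 hz2
  refine ⟨h1.differentiable (by norm_num), max 1 (max M1 M2), by positivity, fun x => ⟨?_, ?_⟩,
    fun x hx => ⟨hz1 x hx, hz2 x hx⟩⟩
  · exact (hM1 x).trans (by simp)
  · exact (hM2 x).trans (by simp)

/-- The symmetries extend a lower bound on `[0, T₀/4 - δ]` to a bound on `|X|` over one period, away
from the points `T₀/4` and `3T₀/4`. -/
theorem SymPer.le_abs {T₀ δ b : ℝ} {X : ℝ → ℝ} (hX : SymPer T₀ X)
    (hb : ∀ τ ∈ Set.Icc (0 : ℝ) (T₀ / 4 - δ), b ≤ X τ) {τ : ℝ} (hτ : τ ∈ Set.Icc 0 T₀)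
    (h : τ ∉ Set.Icc (T₀ / 4 - δ) (T₀ / 4 + δ) ∪ Set.Icc (3 * T₀ / 4 - δ) (3 * T₀ / 4 + δ)) :
    b ≤ |X τ| := by
  obtain ⟨hper, heven, hanti⟩ := hX
  have hrefl : ∀ s, X (T₀ - s) = X s := fun s => by
    rw [← heven (T₀ - s), ← hper (-(T₀ - s))]; congr 1; ring
  have key : ∀ s, 0 ≤ s → s ≤ T₀ / 2 → s ∉ Set.Icc (T₀ / 4 - δ) (T₀ / 4 + δ) → b ≤ |X s| := by
    intro s hs0 hs1 hs
    rcases lt_or_ge s (T₀ / 4 - δ) with h1 | h1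
    · exact (hb s ⟨hs0, h1.le⟩).trans (le_abs_self _)
    · have h2 : T₀ / 4 + δ < s := by
        by_contra! h3
        exact hs ⟨h1, h3⟩
      rw [hanti s, abs_neg]
      exact (hb _ ⟨by linarith, by linarith⟩).trans (le_abs_self _)
  rw [Set.mem_union, not_or] at h
  rcases le_total τ (T₀ / 2) with h1 | h1
  · exact key τ hτ.1 h1 h.1
  · rw [← hrefl τ]
    refine key _ (by linarith [hτ.2]) (by linarith) fun h3 => h.2 ?_
    exact ⟨by linarith [h3.2], by linarith [h3.1]⟩

/-- No measurability of `F` is needed: a non-integrable `F` has integral `0`. -/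
theorem integral_le_of_support {T₀ δ K p q : ℝ} {F : ℝ → ℝ} (hT : 0 ≤ T₀) (hδ : 0 ≤ δ)
    (hK : 0 ≤ K) (hF0 : ∀ τ, 0 ≤ F τ) (hFK : ∀ τ, F τ ≤ K)
    (hF : ∀ τ ∈ Set.Icc 0 T₀, τ ∉ Set.Icc (p - δ) (p + δ) ∪ Set.Icc (q - δ) (q + δ) → F τ = 0) :
    ∫ τ in (0:ℝ)..T₀, F τ ≤ K * (4 * δ) := by
  set S := Set.Icc (p - δ) (p + δ) ∪ Set.Icc (q - δ) (q + δ) with hS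
  have hSm : MeasurableSet S := measurableSet_Icc.union measurableSet_Icc
  have hSfin : volume S ≠ ⊤ := (isCompact_Icc.union isCompact_Icc).measure_ne_top
  have hint : Integrable (S.indicator fun _ => K) (volume : Measure ℝ) :=
    (integrable_indicator_iff hSm).2 (integrableOn_const hSfin)
  have hvol : volume.real S ≤ 4 * δ := by
    refine (measureReal_union_le _ _).trans ?_
    rw [Real.volume_real_Icc_of_le (by linarith), Real.volume_real_Icc_of_le (by linarith)]
    linarith
  rw [intervalIntegral.integral_of_le hT]
  calc ∫ τ in Set.Ioc 0 T₀, F τ ≤ ∫ τ in Set.Ioc 0 T₀, S.indicator (fun _ => K) τ := by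
        refine integral_mono_of_nonneg (Eventually.of_forall hF0) hint.integrableOn ?_
        refine ae_restrict_of_forall_mem measurableSet_Ioc fun τ hτ => ?_
        by_cases h : τ ∈ S
        · simpa [h] using hFK τ
        · simpa [h] using (hF τ (Set.Ioc_subset_Icc_self hτ) h).le
    _ ≤ ∫ τ, S.indicator (fun _ => K) τ :=
        setIntegral_le_integral hint
          (Eventually.of_forall fun τ => Set.indicator_nonneg (fun _ _ => hK) τ)
    _ = volume.real S * K := by
        rw [integral_indicator hSm, setIntegral_const, smul_eq_mul]
    _ ≤ K * (4 * δ) := by nlinarith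

/-- on the set `D_{μ,γ}` of symmetric periodic `C¹` functions with
`‖X₀‖_{C¹} ≤ 3√E` and `X₀(τ) ≥ a₀√γ` for `0 ≤ τ ≤ T₀/4 - γ^{1/2-μ}`, one has
`‖V'(γ^{-1/2}X₀)‖_{H¹_e} ≤ C γ^{-1/4-μ/2}` for all sufficiently small `γ > 0`. -/
theorem stmt15
    (V : ℝ → ℝ) (VL Vinf a0 : ℝ)
    (hV : ContDiff ℝ 2 V) (hVeven : ∀ x, V (-x) = V x)
    (hVnonneg : ∀ x, 0 ≤ V x) (hVle : ∀ x, V x ≤ VL) (hVL : 0 < VL)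
    (ha0 : 0 < a0) (hVinf : 0 < Vinf) (hVinfL : Vinf ≤ VL)
    (hVconst : ∀ x : ℝ, a0 ≤ |x| → V x = Vinf)
    (E μ : ℝ) (hE : VL < E) (hμ : μ ∈ Set.Ioo (0:ℝ) (1/2))
    -- the period function T(E,·), with T₀ = √γ T(E,γ) → √2 π as γ → 0⁺
    (T : ℝ → ℝ) (hTpos : ∀ γ : ℝ, 0 < γ → 0 < T γ)
    (hT : Tendsto (fun γ => Real.sqrt γ * T γ) (nhdsWithin 0 (Set.Ioi 0))
      (nhds (Real.sqrt 2 * π))) :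
    ∃ C > (0:ℝ), ∃ γ₀ > (0:ℝ), ∀ γ ∈ Set.Ioo (0:ℝ) γ₀, ∀ X₀ : ℝ → ℝ,
      Differentiable ℝ X₀ →
      SymPer (Real.sqrt γ * T γ) X₀ →
      (∀ τ, |X₀ τ| ≤ 3 * Real.sqrt E) →
      (∀ τ, |deriv X₀ τ| ≤ 3 * Real.sqrt E) →
      (∀ τ ∈ Set.Icc (0:ℝ) (Real.sqrt γ * T γ / 4 - γ ^ ((1:ℝ)/2 - μ)),
        a0 * Real.sqrt γ ≤ X₀ τ) →
      normH1 (Real.sqrt γ * T γ) (fun τ => deriv V (X₀ τ / Real.sqrt γ))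
        ≤ C * γ ^ (-(1:ℝ)/4 - μ/2) := by
  obtain ⟨hdiff, M, hM0, hM, hz⟩ := exists_bound_of_const_outside hV ha0 hVconst
  have hE0 : 0 < E := hVL.trans hE
  refine ⟨2 * M * √(1 + 9 * E), by positivity, 1, one_pos, ?_⟩
  rintro γ ⟨hγ0, hγ1⟩ X hXd hX - hX' hXb
  have hsγ : 0 < √γ := Real.sqrt_pos.2 hγ0
  have hT₀ : 0 < √γ * T γ := mul_pos hsγ (hTpos γ hγ0)
  set T₀ := √γ * T γ
  set δ := γ ^ ((1:ℝ)/2 - μ) with hδ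
  have hδ0 : 0 < δ := Real.rpow_pos_of_pos hγ0 _
  have hderiv : ∀ τ, deriv (fun τ => deriv V (X τ / √γ)) τ
      = deriv (deriv V) (X τ / √γ) * (deriv X τ / √γ) := fun τ =>
    ((hdiff _).hasDerivAt.comp τ ((hXd τ).hasDerivAt.div_const (√γ))).deriv
  have hint : ∫ τ in (0:ℝ)..T₀, (deriv V (X τ / √γ)) ^ 2
      + (deriv (fun τ => deriv V (X τ / √γ)) τ) ^ 2 ≤ M ^ 2 * (1 + 9 * E / γ) * (4 * δ) := by
    refine integral_le_of_support (p := T₀ / 4) (q := 3 * T₀ / 4) hT₀.le hδ0.le (by positivity)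
      (fun τ => by positivity) (fun τ => ?_) (fun τ hτ hτS => ?_)
    · rw [hderiv, mul_pow, div_pow, Real.sq_sqrt hγ0.le]
      have h1 : (deriv V (X τ / √γ)) ^ 2 ≤ M ^ 2 :=
        sq_le_sq' (abs_le.1 (hM _).1).1 (abs_le.1 (hM _).1).2
      have h2 : (deriv (deriv V) (X τ / √γ)) ^ 2 ≤ M ^ 2 :=
        sq_le_sq' (abs_le.1 (hM _).2).1 (abs_le.1 (hM _).2).2
      have h3 : (deriv X τ) ^ 2 ≤ 9 * E := by
        have := sq_le_sq' (abs_le.1 (hX' τ)).1 (abs_le.1 (hX' τ)).2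
        rw [mul_pow, Real.sq_sqrt hE0.le] at this
        linarith
      have h4 : (deriv X τ) ^ 2 / γ ≤ 9 * E / γ := by gcongr
      have h5 := mul_le_mul h2 h4 (by positivity) (by positivity)
      linarith
    · have hb : a0 ≤ |X τ / √γ| := by
        rw [abs_div, abs_of_pos hsγ, le_div_iff₀ hsγ]
        exact hX.le_abs hXb hτ hτS
      rw [hderiv, (hz _ hb).1, (hz _ hb).2]
      simp
  have hpow : δ / γ = (γ ^ (-(1:ℝ)/4 - μ/2)) ^ 2 := by
    rw [hδ, ← Real.rpow_sub_one hγ0.ne', ← Real.rpow_mul_natCast hγ0.le]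
    congr 1
    push_cast
    ring
  refine Real.sqrt_le_iff.2 ⟨by positivity, hint.trans ?_⟩
  rw [mul_pow, mul_pow, Real.sq_sqrt (by positivity), ← hpow]
  have h1 : 1 + 9 * E / γ ≤ (1 + 9 * E) / γ := by
    rw [add_div]
    gcongr
    exact (one_le_div hγ0).2 hγ1.le
  calc M ^ 2 * (1 + 9 * E / γ) * (4 * δ) ≤ M ^ 2 * ((1 + 9 * E) / γ) * (4 * δ) := by gcongr
    _ = (2 * M) ^ 2 * (1 + 9 * E) * (δ / γ) := by ring
end

section
/- Fix E > V_L. For the symmetric T(E,γ)-periodic solution of ẍ + V'(x) + 2γx = 0 at energy E, with normalized period T₀ = γ^{1/2}T(E,γ), the expansion T₀ = √2 π + 2√2 γ^{1/2} ( ∫₀^{a₀}(E − V(x))^{−1/2}dx − a₀(E − V_∞)^{−1/2} ) + O(γ^{3/2}) holds as γ → 0; consequently the normalized frequency ω₀(E,γ) = 2π/T₀ satisfies ω₀(E,γ) = √2 + O(γ^{1/2}) as γ → 0, and ∂_γ(γ ω₀²(E,γ)) = 2 + O(γ^{1/2}) > 0 for all sufficiently small γ > 0. -/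
open Real

/-!
Put `c = √(E - V∞)`, `t = √γ` and `F(γ) = ∫₀^{a₀} (E - γ s² - V s)^{-1/2} ds`. On `[a₀, c / t]` the
potential is constant, so that part of the period integral is elementary (`outer_integral`), and
`√γ T(γ) = 2√2 H(√γ)` with `H(t) = π/2 - arcsin (a₀ t / c) + t F(t²)`.

The function `F` has bounded derivative near `0` (`inner_hasDerivAt`), since `E - γ s² - V s` stays
away from `0` on `[0, a₀]`, and `arcsin x = x + O(x³)`; together these give
`H(t) = π/2 + t (F(0) - a₀ / c) + O(t³)`, which is the expansion of the period. Moreover `H` is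
differentiable with bounded derivative, and `γ ω₀² = γ (π / (√2 H(√γ)))²`. Its derivative
`π² / (2 H²) - √γ π² H' / (2 H³)` involves `√γ H' = O(√γ)` and `H = π/2 + O(√γ)` only, hence is
`2 + O(√γ)` (`frequency_bounds`).
-/

/-- Beyond the support of `V'` the motion is harmonic, and the time from `b` to the turning point
`c / t` is elementary. -/
lemma outer_integral {c t b : ℝ} (hc : 0 < c) (ht : 0 < t) (hb0 : 0 ≤ b) (hb : b ≤ c / t) :
    IntervalIntegrable (fun s => 1 / √(c ^ 2 - t ^ 2 * s ^ 2)) MeasureTheory.volume b (c / t) ∧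
    ∫ s in b..(c / t), 1 / √(c ^ 2 - t ^ 2 * s ^ 2) = (π / 2 - arcsin (b * t / c)) / t := by
  have hcont : Continuous fun s : ℝ => arcsin (s * t / c) / t := by fun_prop
  have hderiv : ∀ s ∈ Set.Ioo b (c / t),
      HasDerivAt (fun s : ℝ => arcsin (s * t / c) / t) (1 / √(c ^ 2 - t ^ 2 * s ^ 2)) s := by
    intro s hs
    have h0 : 0 ≤ s * t / c := by have := hb0.trans hs.1.le; positivity
    have h1 : s * t / c < 1 := by
      rw [div_lt_one hc]; exact (lt_div_iff₀ ht).1 hs.2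
    have hl : HasDerivAt (fun s : ℝ => s * t / c) (t / c) s := by
      simpa using ((hasDerivAt_id s).mul_const t).div_const c
    have h := ((hasDerivAt_arcsin (by linarith) h1.ne).comp s hl).div_const t
    refine h.congr_deriv ?_
    have hsq : √(c ^ 2 - t ^ 2 * s ^ 2) = c * √(1 - (s * t / c) ^ 2) := by
      have : c ^ 2 - t ^ 2 * s ^ 2 = c ^ 2 * (1 - (s * t / c) ^ 2) := by field_simp
      rw [this, sqrt_mul (by positivity), sqrt_sq hc.le]
    have hpos : 0 < √(1 - (s * t / c) ^ 2) := sqrt_pos.2 (by nlinarith)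
    rw [hsq]
    field_simp
  -- The integrand blows up at the turning point; as the derivative of a continuous function and
  -- being nonnegative it is nevertheless integrable.
  have hint : IntervalIntegrable (fun s => 1 / √(c ^ 2 - t ^ 2 * s ^ 2))
      MeasureTheory.volume b (c / t) := by
    refine intervalIntegral.intervalIntegrable_deriv_of_nonneg
      (g := fun s : ℝ => arcsin (s * t / c) / t) hcont.continuousOn ?_ ?_
    · rwa [min_eq_left hb, max_eq_right hb]
    · intro s _; positivity
  refine ⟨hint, ?_⟩
  rw [intervalIntegral.integral_eq_sub_of_hasDerivAt_of_le hb hcont.continuousOn hderiv hint]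
  have : c / t * t / c = 1 := by field_simp
  rw [this, arcsin_one]; ring

/-- The time spent over the support of `V'` is a differentiable function of `γ` near `γ = 0`, with
bounded derivative. -/
lemma inner_hasDerivAt {V : ℝ → ℝ} (hV : Continuous V) {a m E : ℝ} (ha : 0 < a) (hm : 0 < m)
    (hEV : ∀ x, 2 * m ≤ E - V x) :
    ∃ L : ℝ, 0 ≤ L ∧ ∀ γ : ℝ, |γ| < m / a ^ 2 → ∃ F' : ℝ, |F'| ≤ L ∧
      HasDerivAt (fun g => ∫ s in (0:ℝ)..a, 1 / √(E - g * s ^ 2 - V s)) F' γ := by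
  have hQ : ∀ g : ℝ, |g| < m / a ^ 2 → ∀ s : ℝ, 0 ≤ s → s ≤ a → m ≤ E - g * s ^ 2 - V s := by
    intro g hg s h0 hs
    have h1 : |g| * a ^ 2 ≤ m := ((lt_div_iff₀ (by positivity)).1 hg).le
    have h2 : g * s ^ 2 ≤ |g| * a ^ 2 := by
      have := le_abs_self g
      gcongr
    linarith [hEV s]
  have hb : ∀ g : ℝ, |g| < m / a ^ 2 → ∀ s ∈ Set.uIoc 0 a,
      ‖s ^ 2 / (2 * √(E - g * s ^ 2 - V s) ^ 3)‖ ≤ a ^ 2 / (2 * √m ^ 3) := by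
    intro g hg s hs
    rw [Set.uIoc_of_le ha.le] at hs
    have h := sqrt_le_sqrt (hQ g hg s hs.1.le hs.2)
    have hm' : 0 < √m := sqrt_pos.2 hm
    have := hs.1.le
    rw [norm_of_nonneg (by positivity)]
    have := hs.2
    gcongr
  refine ⟨a ^ 2 / (2 * √m ^ 3) * a, by positivity, fun γ hγ =>
    ⟨∫ s in (0:ℝ)..a, s ^ 2 / (2 * √(E - γ * s ^ 2 - V s) ^ 3), ?_, ?_⟩⟩
  · have := intervalIntegral.norm_integral_le_of_norm_le_const (hb γ hγ)
    rwa [sub_zero, abs_of_pos ha] at this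
  · have hVm : Measurable V := hV.measurable
    refine (intervalIntegral.hasDerivAt_integral_of_dominated_loc_of_deriv_le
      (F' := fun g s => s ^ 2 / (2 * √(E - g * s ^ 2 - V s) ^ 3))
      (s := {g | |g| < m / a ^ 2}) (bound := fun _ => a ^ 2 / (2 * √m ^ 3))
      ((isOpen_lt continuous_abs continuous_const).mem_nhds hγ) ?_ ?_ ?_ ?_ ?_ ?_).2
    · refine Filter.Eventually.of_forall fun g => ?_
      have : Measurable fun s => 1 / √(E - g * s ^ 2 - V s) := by fun_prop
      exact this.aestronglyMeasurable
    · refine ContinuousOn.intervalIntegrable ?_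
      refine ContinuousOn.div (by fun_prop) (by fun_prop) fun s hs => ?_
      rw [Set.uIcc_of_le ha.le] at hs
      exact (sqrt_pos.2 (hm.trans_le (hQ γ hγ s hs.1 hs.2))).ne'
    · have : Measurable fun s => s ^ 2 / (2 * √(E - γ * s ^ 2 - V s) ^ 3) := by fun_prop
      exact this.aestronglyMeasurable
    · exact Filter.Eventually.of_forall fun s hs g hg => hb g hg s hs
    · exact intervalIntegrable_const
    · refine Filter.Eventually.of_forall fun s hs g hg => ?_
      rw [Set.uIoc_of_le ha.le] at hs
      have hpos := hm.trans_le (hQ g hg s hs.1.le hs.2)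
      have hl : HasDerivAt (fun g : ℝ => E - g * s ^ 2 - V s) (-s ^ 2) g := by
        simpa using (((hasDerivAt_id g).mul_const (s ^ 2)).const_sub E).sub_const (V s)
      have hsq := sqrt_pos.2 hpos
      have h := (hl.sqrt hpos.ne').fun_inv hsq.ne'
      simp only [one_div]
      refine h.congr_deriv ?_
      field_simp

lemma abs_arcsin_sub_self_le {x : ℝ} (h0 : 0 < x) (h1 : x ≤ 1) :
    |arcsin x - x| ≤ 2 * x ^ 3 := by
  have hs : sin (arcsin x) = x := sin_arcsin (by linarith) h1
  have hy : 0 < arcsin x := arcsin_pos.2 h0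
  have h2 : arcsin x ≤ 2 * x := by
    have h := mul_le_sin hy.le (arcsin_le_pi_div_two x)
    rw [hs, div_mul_eq_mul_div, div_le_iff₀ pi_pos] at h
    nlinarith [pi_lt_four]
  have h3 := sin_gt_sub_cube hy
  have h4 := sin_lt hy
  rw [hs] at h3 h4
  have h5 : arcsin x ^ 3 ≤ (2 * x) ^ 3 := by gcongr
  rw [abs_of_nonneg (by linarith)]
  nlinarith [pow_pos h0 3]

/-- If `H t = π / 2 + O(t)` with bounded derivative, then `γ ↦ γ * (π / (√2 * H √γ)) ^ 2` has
derivative `2 + O(√γ)`. -/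
lemma frequency_bounds {H H' : ℝ → ℝ} {B t : ℝ} (ht : 0 < t) (hBt : B * t ≤ 1 / 64)
    (hd : HasDerivAt H (H' t) t) (hH' : |H' t| ≤ B) (hH : |H t - π / 2| ≤ B * t) :
    |π / (√2 * H t) - √2| ≤ 64 * B * t ∧
    |deriv (fun g => g * (π / (√2 * H √g)) ^ 2) (t ^ 2) - 2| ≤ 64 * B * t ∧
    0 < deriv (fun g => g * (π / (√2 * H √g)) ^ 2) (t ^ 2) := by
  have hB : 0 ≤ B := (abs_nonneg _).trans hH'
  have hlo : 1 ≤ H t := by linarith [(abs_le.1 hH).1, pi_gt_three]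
  have hhi : H t ≤ 3 := by linarith [(abs_le.1 hH).2, pi_lt_four]
  have hpos : 0 < H t := by linarith
  have h2 : (0:ℝ) < √2 := by positivity
  have h2sq : √2 ^ 2 = 2 := sq_sqrt (by norm_num)
  have h21 : 1 ≤ √2 := by nlinarith
  have hBt0 : 0 ≤ B * t := by positivity
  constructor
  · have : π / (√2 * H t) - √2 = 2 * (π / 2 - H t) / (√2 * H t) := by
      field_simp; rw [h2sq]; ring
    rw [this, abs_div, abs_mul, abs_two, abs_of_pos (by positivity : 0 < √2 * H t),
      abs_sub_comm, div_le_iff₀ (by positivity)]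
    have : 1 ≤ √2 * H t := by nlinarith
    nlinarith
  have hst : √(t ^ 2) = t := sqrt_sq ht.le
  have hderiv : HasDerivAt (fun g => g * (π / (√2 * H √g)) ^ 2)
      (π ^ 2 / (2 * H t ^ 2) - t * π ^ 2 * H' t / (2 * H t ^ 3)) (t ^ 2) := by
    have hs := hasDerivAt_sqrt (x := t ^ 2) (by positivity)
    have hd' : HasDerivAt H (H' t) √(t ^ 2) := by rwa [hst]
    have hc : HasDerivAt (fun g => H √g) (H' t * (1 / (2 * √(t ^ 2)))) (t ^ 2) := hd'.comp _ hs
    have h := (hasDerivAt_id (t ^ 2)).fun_mul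
      (((hasDerivAt_const (t ^ 2) π).fun_div (hc.const_mul √2)
        (by rw [hst]; positivity)).fun_pow 2)
    refine h.congr_deriv ?_
    norm_num [hst, div_pow, mul_pow]
    field_simp
    ring
  have key : |π ^ 2 / (2 * H t ^ 2) - t * π ^ 2 * H' t / (2 * H t ^ 3) - 2| ≤ 64 * B * t := by
    have e : π ^ 2 / (2 * H t ^ 2) - t * π ^ 2 * H' t / (2 * H t ^ 3) - 2
        = 2 * (π / 2 - H t) * (π / 2 + H t) / H t ^ 2 - t * π ^ 2 * H' t / (2 * H t ^ 3) := by
      field_simp; ring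
    have e1 : |2 * (π / 2 - H t) * (π / 2 + H t) / H t ^ 2| ≤ 10 * (B * t) := by
      rw [abs_div, abs_mul, abs_mul, abs_two, abs_sub_comm,
        abs_of_pos (by positivity : 0 < π / 2 + H t), abs_of_pos (by positivity : 0 < H t ^ 2),
        div_le_iff₀ (by positivity)]
      have h5 : π / 2 + H t ≤ 5 := by linarith [pi_lt_four]
      have : 1 ≤ H t ^ 2 := by nlinarith
      calc 2 * |H t - π / 2| * (π / 2 + H t) ≤ 2 * (B * t) * 5 := by gcongr
        _ ≤ 10 * (B * t) * H t ^ 2 := by nlinarith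
    have e2 : |t * π ^ 2 * H' t / (2 * H t ^ 3)| ≤ 8 * (B * t) := by
      rw [abs_div, abs_mul, abs_of_pos (by positivity : 0 < t * π ^ 2),
        abs_of_pos (by positivity : 0 < 2 * H t ^ 3), div_le_iff₀ (by positivity)]
      have : 1 ≤ H t ^ 3 := one_le_pow₀ hlo
      have hpi : π ≤ 4 := pi_lt_four.le
      calc t * π ^ 2 * |H' t| ≤ t * 4 ^ 2 * B := by gcongr
        _ ≤ 8 * (B * t) * (2 * H t ^ 3) := by nlinarith
    rw [e]
    refine (abs_sub _ _).trans ?_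
    linarith
  rw [hderiv.deriv]
  exact ⟨key, by linarith [(abs_le.1 key).1]⟩

set_option maxHeartbeats 1000000 in
/-- with `T(E,γ) = 2√2 ∫₀^{a} dx/√(E - γx² - V(x))`, `a = √(E-V∞)/√γ`,
the normalized period `T₀ = √γ T(E,γ)` satisfies
`T₀ = √2π + 2√2√γ(∫₀^{a₀}(E-V)^{-1/2} - a₀(E-V∞)^{-1/2}) + O(γ^{3/2})`,
the normalized frequency `ω₀ = 2π/T₀` satisfies `ω₀ = √2 + O(γ^{1/2})`, and
`∂_γ(γω₀²) = 2 + O(γ^{1/2}) > 0` as `γ → 0`. -/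
theorem stmt19
    (V : ℝ → ℝ) (VL Vinf a0 : ℝ)
    (hV : ContDiff ℝ 2 V) (hVeven : ∀ x, V (-x) = V x)
    (hVnonneg : ∀ x, 0 ≤ V x) (hVle : ∀ x, V x ≤ VL) (hVL : 0 < VL)
    (ha0 : 0 < a0) (hVinf : 0 < Vinf) (hVinfL : Vinf ≤ VL)
    (hVconst : ∀ x : ℝ, a0 ≤ |x| → V x = Vinf)
    (E : ℝ) (hE : VL < E)
    (T : ℝ → ℝ)
    (hT : ∀ γ : ℝ, 0 < γ → T γ = 2 * Real.sqrt 2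
      * ∫ s in (0:ℝ)..(Real.sqrt (E - Vinf) / Real.sqrt γ),
          1 / Real.sqrt (E - γ * s ^ 2 - V s))
    (ω₀ : ℝ → ℝ)
    (hω₀ : ∀ γ : ℝ, 0 < γ → ω₀ γ = 2 * π / (Real.sqrt γ * T γ)) :
    ∃ C > (0:ℝ), ∃ γ₀ > (0:ℝ), ∀ γ ∈ Set.Ioo (0:ℝ) γ₀,
      |Real.sqrt γ * T γ - (Real.sqrt 2 * π
          + 2 * Real.sqrt 2 * Real.sqrt γ
            * ((∫ s in (0:ℝ)..a0, 1 / Real.sqrt (E - V s))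
              - a0 / Real.sqrt (E - Vinf)))| ≤ C * γ ^ ((3:ℝ)/2) ∧
      |ω₀ γ - Real.sqrt 2| ≤ C * Real.sqrt γ ∧
      |deriv (fun g => g * (ω₀ g) ^ 2) γ - 2| ≤ C * Real.sqrt γ ∧
      0 < deriv (fun g => g * (ω₀ g) ^ 2) γ := by
  obtain ⟨m, hmdef⟩ : ∃ m, m = (E - VL) / 2 := ⟨_, rfl⟩
  have hm : 0 < m := by linarith
  have hEV : ∀ x, 2 * m ≤ E - V x := fun x => by linarith [hVle x]
  obtain ⟨L, hL, hF⟩ := inner_hasDerivAt hV.continuous ha0 hm hEV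
  set F : ℝ → ℝ := fun g => ∫ s in (0:ℝ)..a0, 1 / √(E - g * s ^ 2 - V s) with hFdef
  choose! F' hF'L hF' using hF
  set c := √(E - Vinf) with hcdef
  have hc : 0 < c := sqrt_pos.2 (by linarith)
  have hc2 : c ^ 2 = E - Vinf := sq_sqrt (by linarith)
  have hF0 : (∫ s in (0:ℝ)..a0, 1 / √(E - V s)) = F 0 := by simp [hFdef]
  rw [hF0]
  obtain ⟨H, hH⟩ : ∃ H : ℝ → ℝ, H = fun u => π / 2 - arcsin (a0 * u / c) + u * F (u ^ 2) :=
    ⟨_, rfl⟩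
  obtain ⟨H', hH'⟩ : ∃ H' : ℝ → ℝ, H' = fun u =>
      -(1 / √(1 - (a0 * u / c) ^ 2) * (a0 / c)) + (F (u ^ 2) + u * (F' (u ^ 2) * (2 * u))) :=
    ⟨_, rfl⟩
  have ha2 : 0 < a0 ^ 2 := by positivity
  have hlt : m / (4 * a0 ^ 2) < m / a0 ^ 2 := by
    apply div_lt_div_of_pos_left hm ha2; linarith
  -- `a₀² u² ≤ m / 4` while `c² ≥ 2 m`, so the argument of `arcsin` stays away from `1`.
  have hx : ∀ u, 0 < u → u ^ 2 < m / (4 * a0 ^ 2) → a0 * u / c ≤ 1 / 2 := by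
    intro u hu h
    rw [lt_div_iff₀ (by positivity)] at h
    rw [div_le_iff₀ hc]
    refine le_of_sq_le_sq ?_ (by positivity)
    nlinarith
  have hu' : ∀ u, u ^ 2 < m / (4 * a0 ^ 2) → |u ^ 2| < m / a0 ^ 2 := by
    intro u h
    rw [abs_of_nonneg (sq_nonneg u)]; exact h.trans hlt
  have hFlip : ∀ u, u ^ 2 < m / (4 * a0 ^ 2) → |F (u ^ 2) - F 0| ≤ L * u ^ 2 := by
    intro u h
    have := Convex.norm_image_sub_le_of_norm_hasDerivWithin_le (f := F) (f' := F') (C := L)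
      (s := Set.Icc 0 (u ^ 2)) (x := 0) (y := u ^ 2) ?_ ?_ (convex_Icc _ _)
      ⟨le_rfl, sq_nonneg u⟩ ⟨sq_nonneg u, le_rfl⟩
    · simpa [abs_of_nonneg (sq_nonneg u)] using this
    · intro x hx
      refine (hF' x ?_).hasDerivWithinAt
      rw [abs_of_nonneg hx.1]; exact hx.2.trans_lt (h.trans hlt)
    · intro x hx
      refine hF'L x ?_
      rw [abs_of_nonneg hx.1]; exact hx.2.trans_lt (h.trans hlt)
  have hexp : ∀ u, 0 < u → u ^ 2 < m / (4 * a0 ^ 2) →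
      |H u - (π / 2 + u * (F 0 - a0 / c))| ≤ (2 * (a0 / c) ^ 3 + L) * u ^ 3 := by
    intro u hu h
    have e : H u - (π / 2 + u * (F 0 - a0 / c))
        = u * (F (u ^ 2) - F 0) - (arcsin (a0 * u / c) - a0 * u / c) := by
      rw [hH]; ring
    rw [e]
    refine (abs_sub _ _).trans ?_
    rw [abs_mul, abs_of_pos hu]
    have h1 := abs_arcsin_sub_self_le (x := a0 * u / c) (by positivity) (by linarith [hx u hu h])
    have h2 : u * |F (u ^ 2) - F 0| ≤ u * (L * u ^ 2) := by gcongr; exact hFlip u h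
    have h3 : (a0 * u / c) ^ 3 = (a0 / c) ^ 3 * u ^ 3 := by ring
    rw [h3] at h1
    linarith
  -- One constant dominates the error terms of both `H` and `H'`.
  obtain ⟨B, hB⟩ : ∃ B, B = 2 * (a0 / c) ^ 3 + 4 * L + |F 0 - a0 / c| + 2 * (a0 / c) + |F 0| + 1 :=
    ⟨_, rfl⟩
  have hac : 0 < a0 / c := by positivity
  have hac3 : 0 < (a0 / c) ^ 3 := by positivity
  have hn1 := abs_nonneg (F 0)
  have hn2 := abs_nonneg (F 0 - a0 / c)
  have hBpos : 0 < B := by linarith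
  have hHd : ∀ u, 0 < u → u ^ 2 < m / (4 * a0 ^ 2) → HasDerivAt H (H' u) u := by
    intro u hu h
    have hxu := hx u hu h
    have hx0 : 0 < a0 * u / c := by positivity
    have hl : HasDerivAt (fun u : ℝ => a0 * u / c) (a0 / c) u := by
      simpa using ((hasDerivAt_id u).const_mul a0).div_const c
    have h1 := (hasDerivAt_arcsin (x := a0 * u / c) (by linarith) (by linarith)).comp u hl
    have h2 : HasDerivAt (fun u : ℝ => u ^ 2) (2 * u) u := by simpa using hasDerivAt_pow 2 u
    have h3 : HasDerivAt (fun u : ℝ => F (u ^ 2)) (F' (u ^ 2) * (2 * u)) u :=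
      HasDerivAt.comp (h := fun u : ℝ => u ^ 2) u (hF' (u ^ 2) (hu' u h)) h2
    have h4 := (h1.const_sub (π / 2)).add ((hasDerivAt_id u).mul h3)
    rw [hH, hH']
    refine HasDerivAt.congr_deriv h4 ?_
    simp
  have hHb : ∀ u, 0 < u → u ≤ 1 → u ^ 2 < m / (4 * a0 ^ 2) → |H u - π / 2| ≤ B * u := by
    intro u hu hu1 h
    have h1 := hexp u hu h
    have h2 : |H u - π / 2| ≤ |H u - (π / 2 + u * (F 0 - a0 / c))| + |u * (F 0 - a0 / c)| := by
      refine le_trans (le_of_eq ?_) (abs_add_le _ _)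
      congr 1; ring
    rw [abs_mul, abs_of_pos hu] at h2
    have h3 : u ^ 3 ≤ u := by nlinarith [mul_pos hu hu]
    have h4 : (2 * (a0 / c) ^ 3 + L) * u ^ 3 ≤ (2 * (a0 / c) ^ 3 + L) * u := by gcongr
    have h5 : 0 ≤ (3 * L + 2 * (a0 / c) + |F 0| + 1) * u := by positivity
    rw [hB]
    linarith
  have hH'b : ∀ u, 0 < u → u ≤ 1 → u ^ 2 < m / (4 * a0 ^ 2) → |H' u| ≤ B := by
    intro u hu hu1 h
    have hxu := hx u hu h
    have hx0 : 0 < a0 * u / c := by positivity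
    have hs : 1 / 2 ≤ √(1 - (a0 * u / c) ^ 2) := le_sqrt_of_sq_le (by nlinarith)
    have h1 : |-(1 / √(1 - (a0 * u / c) ^ 2) * (a0 / c))| ≤ 2 * (a0 / c) := by
      rw [abs_neg, abs_of_nonneg (by positivity)]
      have : 1 / √(1 - (a0 * u / c) ^ 2) ≤ 2 := by
        rw [div_le_iff₀ (by linarith)]; linarith
      gcongr
    have hu2 : u ^ 2 ≤ 1 := by nlinarith
    have h2 : |F (u ^ 2)| ≤ |F 0| + L := by
      have h3 := hFlip u h
      have h4 := abs_sub_abs_le_abs_sub (F (u ^ 2)) (F 0)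
      nlinarith
    have h3 : |u * (F' (u ^ 2) * (2 * u))| ≤ 2 * L := by
      have e : u * (F' (u ^ 2) * (2 * u)) = 2 * u ^ 2 * F' (u ^ 2) := by ring
      rw [e, abs_mul, abs_of_nonneg (by positivity)]
      have := hF'L _ (hu' u h)
      have h0 := abs_nonneg (F' (u ^ 2))
      nlinarith
    rw [hH', hB]
    have h4 := abs_add_le (-(1 / √(1 - (a0 * u / c) ^ 2) * (a0 / c)))
      (F (u ^ 2) + u * (F' (u ^ 2) * (2 * u)))
    have h5 := abs_add_le (F (u ^ 2)) (u * (F' (u ^ 2) * (2 * u)))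
    simp only
    linarith
  have hT' : ∀ γ, 0 < γ → γ < m / (4 * a0 ^ 2) → √γ * T γ = 2 * √2 * H √γ := by
    intro γ hγ h
    have ht : 0 < √γ := sqrt_pos.2 hγ
    have hts : √γ ^ 2 = γ := sq_sqrt hγ.le
    have hac' : a0 ≤ c / √γ := by
      have := hx √γ ht (by rwa [hts])
      rw [div_le_iff₀ hc] at this
      rw [le_div_iff₀ ht]; linarith
    obtain ⟨hi, hv⟩ := outer_integral hc ht ha0.le hac'
    have heq : Set.EqOn (fun s => 1 / √(c ^ 2 - √γ ^ 2 * s ^ 2))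
        (fun s => 1 / √(E - γ * s ^ 2 - V s)) (Set.uIcc a0 (c / √γ)) := by
      intro s hs
      rw [Set.uIcc_of_le hac'] at hs
      have := hVconst s (hs.1.trans (le_abs_self s))
      simp only [hts, hc2, this]
      congr 2; ring
    rw [intervalIntegral.integral_congr heq] at hv
    have hi' := hi.congr (f := fun s => 1 / √(c ^ 2 - √γ ^ 2 * s ^ 2))
      (g := fun s => 1 / √(E - γ * s ^ 2 - V s))
      (fun s hs => heq (Set.uIoc_subset_uIcc hs))
    have hin : IntervalIntegrable (fun s => 1 / √(E - γ * s ^ 2 - V s))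
        MeasureTheory.volume 0 a0 := by
      have hVc := hV.continuous
      refine ContinuousOn.intervalIntegrable ?_
      refine ContinuousOn.div (by fun_prop) (by fun_prop) fun s hs => ?_
      rw [Set.uIcc_of_le ha0.le] at hs
      refine (sqrt_pos.2 ?_).ne'
      have h1 : γ * (4 * a0 ^ 2) < m := (lt_div_iff₀ (by positivity)).1 h
      have h2 : γ * s ^ 2 ≤ γ * a0 ^ 2 := by
        have := hs.1; have := hs.2; gcongr
      have h3 : 0 ≤ γ * a0 ^ 2 := by positivity
      linarith [hEV s]
    rw [hT γ hγ, ← intervalIntegral.integral_add_adjacent_intervals hin hi', hv, hH]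
    simp only [hts, hFdef]
    field_simp
    ring
  have hω' : ∀ γ, 0 < γ → γ < m / (4 * a0 ^ 2) → ω₀ γ = π / (√2 * H √γ) := by
    intro γ hγ h
    rw [hω₀ γ hγ, hT' γ hγ h, mul_assoc, mul_div_mul_left _ _ two_ne_zero]
  refine ⟨64 * B, by positivity, min (m / (4 * a0 ^ 2)) (min 1 ((1 / (64 * B)) ^ 2)),
    by positivity, ?_⟩
  rintro γ ⟨hγ, hγ'⟩
  obtain ⟨h1, h2⟩ := lt_min_iff.1 hγ'
  obtain ⟨h2, h3⟩ := lt_min_iff.1 h2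
  obtain ⟨t, htdef⟩ : ∃ t, t = √γ := ⟨_, rfl⟩
  have ht : 0 < t := htdef ▸ sqrt_pos.2 hγ
  have hts : t ^ 2 = γ := htdef ▸ sq_sqrt hγ.le
  have ht1 : t ≤ 1 := by nlinarith
  have h1' : t ^ 2 < m / (4 * a0 ^ 2) := by rwa [hts]
  have hBt : B * t ≤ 1 / 64 := by
    rw [← hts] at h3
    have := (lt_of_pow_lt_pow_left₀ 2 (by positivity) h3).le
    rw [le_div_iff₀ (by positivity)] at this
    linarith
  obtain ⟨k1, k2, k3⟩ := frequency_bounds ht hBt (hHd t ht h1') (hH'b t ht ht1 h1')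
    (hHb t ht ht1 h1')
  have hder : deriv (fun g => g * (ω₀ g) ^ 2) γ
      = deriv (fun g => g * (π / (√2 * H √g)) ^ 2) (t ^ 2) := by
    rw [hts]
    apply Filter.EventuallyEq.deriv_eq
    filter_upwards [Ioo_mem_nhds hγ h1] with g hg
    rw [hω' g hg.1 hg.2]
  rw [hder, hT' γ hγ h1, hω' γ hγ h1, ← htdef]
  refine ⟨?_, k1, k2, k3⟩
  have hpow : γ ^ ((3:ℝ) / 2) = t ^ 3 := by
    rw [← hts, ← rpow_natCast t 2, ← rpow_mul ht.le, ← rpow_natCast t 3]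
    norm_num
  have e : 2 * √2 * H t - (√2 * π + 2 * √2 * t * (F 0 - a0 / c))
      = 2 * √2 * (H t - (π / 2 + t * (F 0 - a0 / c))) := by ring
  rw [hpow, e, abs_mul, abs_of_pos (by positivity)]
  have h22 : √2 ≤ 2 := by rw [sqrt_le_left (by norm_num)]; norm_num
  calc 2 * √2 * |H t - (π / 2 + t * (F 0 - a0 / c))|
      ≤ 2 * 2 * ((2 * (a0 / c) ^ 3 + L) * t ^ 3) := by
        gcongr; exact hexp t ht h1'
    _ ≤ 2 * 2 * (B * t ^ 3) := by
        gcongr; linarith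
    _ ≤ 64 * B * t ^ 3 := by
        have : 0 ≤ B * t ^ 3 := by positivity
        linarith
end
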